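/- arXiv:1409.2333 — 2 statements merged into one kernel-verified Lean document; each statement's English description precedes it below -/
import Mathlib

section
/- Let ℓ ∈ ℕ and let u be a nonzero element of the eigenspace E_ℓ. Then the number μ(u) of nodal domains of u satisfies the improved bound μ(u) ≤ μ_L(ℓ), where μ_L(ℓ) = 2(r² + 1) if ℓ = 2r is even, and μ_L(ℓ) = 2r(r+1) + 2 if ℓ = 2r+1 is odd. Moreover μ_L(ℓ) < ℓ(ℓ+1)/2 + 1 for all ℓ ≥ 3, and μ_L(2) = 2·(2+1)/2·... = 4 equals the Courant bound for ℓ = 2. -/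
/-- The physicist's Hermite polynomials: `H 0 = 1`, `H 1 = 2X`,
`H (n+2) = 2X · H (n+1) - 2(n+1) · H n`. -/
noncomputable def H : ℕ → Polynomial ℝ
  | 0 => 1
  | 1 => Polynomial.C 2 * Polynomial.X
  | n + 2 => Polynomial.C 2 * Polynomial.X * H (n + 1) - Polynomial.C (2 * (n + 1) : ℝ) * H n

/-- The basis eigenfunctions `φ_{m,n}(x,y) = H_m(x) H_n(y) e^{-(x²+y²)/2}` of the 2D
isotropic quantum harmonic oscillator. -/
noncomputable def phi (m n : ℕ) : ℝ × ℝ → ℝ := fun p =>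
  (H m).eval p.1 * (H n).eval p.2 * Real.exp (-(p.1 ^ 2 + p.2 ^ 2) / 2)

/-- The eigenspace `E_ℓ` associated with the eigenvalue `2(ℓ+1)`: the real span of
`φ_{ℓ-j,j}`, `0 ≤ j ≤ ℓ`. -/
noncomputable def eigenspace (ℓ : ℕ) : Submodule ℝ (ℝ × ℝ → ℝ) :=
  Submodule.span ℝ {f : ℝ × ℝ → ℝ | ∃ j : ℕ, j ≤ ℓ ∧ f = phi (ℓ - j) j}

/-- The number `μ(u)` of nodal domains of `u`: the number of connected components of
`{p : u p ≠ 0}`. -/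
noncomputable def mu (u : ℝ × ℝ → ℝ) : ℕ :=
  {C : Set (ℝ × ℝ) | ∃ p : ℝ × ℝ, u p ≠ 0 ∧
    C = connectedComponentIn {q : ℝ × ℝ | u q ≠ 0} p}.ncard

/-- Leydold's improved bound: `μ_L(2r) = 2(r²+1)` and `μ_L(2r+1) = 2r(r+1)+2`. -/
def muL (ℓ : ℕ) : ℕ :=
  if ℓ % 2 = 0 then 2 * ((ℓ / 2) ^ 2 + 1) else 2 * (ℓ / 2) * (ℓ / 2 + 1) + 2

/-! Let `u ∈ E_ℓ` and let `D i` be antipodally symmetric disjoint open sets with `u = 0` on their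
frontiers. Every function `f = ∑ k i • 1_{D i} u` has the Rayleigh quotient of `u`. The parity of
`u` makes `f` orthogonal to the `φ_{m,n}` of the opposite parity, so prescribing `f ⊥ φ_{m,n}` for
all `m + n < ℓ` costs only as many linear conditions on `k` as there are modes of the parity of `ℓ`
below `ℓ`. Under these conditions Parseval's identity forces `f ∈ E_ℓ`; if moreover `f` vanishes on
one of the sets then `f = 0` by analyticity. Hence there are at most one more sets than conditions.
Apply this to the unions `C ∪ -C`, where `C` is a nodal domain: each contains at most two nodal
domains. -/

open MeasureTheory Filter Topology

section IntegrationByParts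

variable {E : Type*} [NormedAddCommGroup E] [NormedSpace ℝ E]

lemma countable_setOf_eq_zero_and_deriv_ne_zero {f f' : ℝ → E}
    (hf : ∀ x, HasDerivAt f (f' x) x) : {x | f x = 0 ∧ f' x ≠ 0}.Countable := by
  set Z := {x | f x = 0 ∧ f' x ≠ 0}
  refine (HereditarilyLindelofSpace.isLindelof Z).countable_of_isDiscrete ?_
  refine isDiscrete_iff_nhdsNE.mpr fun x hx => inf_principal_eq_bot.mpr ?_
  filter_upwards [(hf x).eventually_ne (c := 0) hx.2] with z hz hzZ
  exact hz hzZ.1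

lemma hasDerivAt_indicator {f : ℝ → E} {f' : ℝ → E} {U : Set ℝ} {x : ℝ} (hU : IsOpen U)
    (hf : HasDerivAt f (f' x) x) (hfr : x ∈ frontier U → f x = 0 ∧ f' x = 0) :
    HasDerivAt (U.indicator f) (U.indicator f' x) x := by
  by_cases hxU : x ∈ U
  · rw [Set.indicator_of_mem hxU]
    exact hf.congr_of_eventuallyEq
      (Set.eqOn_indicator.eventuallyEq_of_mem (hU.mem_nhds hxU))
  rw [Set.indicator_of_notMem hxU]
  by_cases hxc : x ∈ closure U
  · obtain ⟨hfx, hf'x⟩ := hfr ⟨hxc, by rwa [hU.interior_eq]⟩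
    simp only [hasDerivAt_iff_isLittleO, hf'x, hfx, smul_zero, sub_zero] at hf
    simp only [hasDerivAt_iff_isLittleO, Set.indicator_of_notMem hxU, smul_zero, sub_zero]
    exact (Asymptotics.isBigO_of_le _ (norm_indicator_le_norm_self f)).trans_isLittleO hf
  · refine (hasDerivAt_const x (0 : E)).congr_of_eventuallyEq ?_
    filter_upwards [isClosed_closure.isOpen_compl.mem_nhds hxc] with z hz
    exact Set.indicator_of_notMem (fun h => hz (subset_closure h)) f

variable [CompleteSpace E]

-- The indicator extension of `f` is differentiable off the frontier points where `f' ≠ 0`, and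
-- these are isolated zeros of `f`, hence countably many.
lemma setIntegral_eq_zero_of_hasDerivAt_of_frontier {f f' : ℝ → E} {U : Set ℝ}
    (hderiv : ∀ x, HasDerivAt f (f' x) x) (hf : Integrable f) (hf' : Integrable f')
    (hU : IsOpen U) (hfr : ∀ x ∈ frontier U, f x = 0) : ∫ x in U, f' x = 0 := by
  have hcont : Continuous (U.indicator f) :=
    Continuous.indicator hfr (continuous_iff_continuousAt.2 fun x => (hderiv x).continuousAt)
  have hint : Integrable (U.indicator f') := hf'.indicator hU.measurableSet
  have hFTC (n : ℕ) : ∫ x in -(n : ℝ)..n, U.indicator f' x = U.indicator f n - U.indicator f (-n) :=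
    integral_eq_of_hasDerivAt_off_countable _ _ (countable_setOf_eq_zero_and_deriv_ne_zero hderiv)
      hcont.continuousOn
      (fun x hx => hasDerivAt_indicator hU (hderiv x) fun hxfr =>
        ⟨hfr x hxfr, by_contra fun h => hx.2 ⟨hfr x hxfr, h⟩⟩)
      hint.intervalIntegrable
  have htop : Tendsto (fun n : ℕ => (n : ℝ)) atTop atTop := tendsto_natCast_atTop_atTop
  have hbot : Tendsto (fun n : ℕ => -(n : ℝ)) atTop atBot := tendsto_neg_atTop_atBot.comp htop
  have hindicator {l : Filter ℝ} (h : Tendsto f l (𝓝 0)) : Tendsto (U.indicator f) l (𝓝 0) :=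
    squeeze_zero_norm (norm_indicator_le_norm_self f) (by simpa using h.norm)
  have hlim_top : Tendsto f atTop (𝓝 0) :=
    tendsto_zero_of_hasDerivAt_of_integrableOn_Ioi (a := 0) (fun x _ => hderiv x)
      hf'.integrableOn hf.integrableOn
  have hlim_bot : Tendsto f atBot (𝓝 0) :=
    tendsto_zero_of_hasDerivAt_of_integrableOn_Iic (a := 0) (fun x _ => hderiv x)
      hf'.integrableOn hf.integrableOn
  have hlim := intervalIntegral_tendsto_integral hint hbot htop
  simp only [hFTC, integral_indicator hU.measurableSet] at hlim
  refine tendsto_nhds_unique hlim ?_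
  simpa using ((hindicator hlim_top).comp htop).sub ((hindicator hlim_bot).comp hbot)

lemma setIntegral_eq_zero_of_hasDerivAt_fst {Y : Type*} [TopologicalSpace Y]
    [SecondCountableTopology Y] [MeasurableSpace Y] [OpensMeasurableSpace Y] {ν : Measure Y}
    [SFinite ν] {F F' : ℝ × Y → E} {D : Set (ℝ × Y)}
    (hderiv : ∀ x y, HasDerivAt (fun t => F (t, y)) (F' (x, y)) x)
    (hF : Integrable F (volume.prod ν)) (hF' : Integrable F' (volume.prod ν)) (hD : IsOpen D)
    (hfr : ∀ p ∈ frontier D, F p = 0) : ∫ p in D, F' p ∂(volume.prod ν) = 0 := by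
  rw [← integral_indicator hD.measurableSet,
    integral_prod_symm _ (hF'.indicator hD.measurableSet)]
  refine integral_eq_zero_of_ae ?_
  filter_upwards [hF.prod_left_ae, hF'.prod_left_ae] with y hFy hF'y
  have hcont : Continuous fun x : ℝ => (x, y) := by fun_prop
  have hslice : IsOpen ((fun x : ℝ => (x, y)) ⁻¹' D) := hD.preimage hcont
  have hzero : ∫ x in (fun x : ℝ => (x, y)) ⁻¹' D, F' (x, y) = 0 :=
    setIntegral_eq_zero_of_hasDerivAt_of_frontier (fun x => hderiv x y) hFy hF'y hslice
      fun x hx => hfr _ (hcont.frontier_preimage_subset D hx)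
  rwa [← integral_indicator hslice.measurableSet] at hzero

lemma setIntegral_eq_zero_of_hasDerivAt_snd {X : Type*} [TopologicalSpace X]
    [SecondCountableTopology X] [MeasurableSpace X] [OpensMeasurableSpace X] {ν : Measure X}
    [SFinite ν] {F F' : X × ℝ → E} {D : Set (X × ℝ)}
    (hderiv : ∀ x y, HasDerivAt (fun t => F (x, t)) (F' (x, y)) y)
    (hF : Integrable F (ν.prod volume)) (hF' : Integrable F' (ν.prod volume)) (hD : IsOpen D)
    (hfr : ∀ p ∈ frontier D, F p = 0) : ∫ p in D, F' p ∂(ν.prod volume) = 0 := by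
  rw [← Measure.measurePreserving_swap.setIntegral_preimage_emb
    MeasurableEquiv.prodComm.measurableEmbedding]
  exact setIntegral_eq_zero_of_hasDerivAt_fst (fun y x => hderiv x y) hF.swap hF'.swap
    (hD.preimage continuous_swap)
    fun p hp => hfr _ (continuous_swap.frontier_preimage_subset D hp)

lemma setIntegral_fderiv_apply_eq_zero {F : ℝ × ℝ → E} {D : Set (ℝ × ℝ)}
    (hdiff : Differentiable ℝ F) (hF : Integrable F)
    (hF' : ∀ v, Integrable fun p => fderiv ℝ F p v) (hD : IsOpen D)
    (hfr : ∀ p ∈ frontier D, F p = 0) (v : ℝ × ℝ) : ∫ p in D, fderiv ℝ F p v = 0 := by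
  have hfst : ∫ p in D, fderiv ℝ F p (1, 0) = 0 :=
    setIntegral_eq_zero_of_hasDerivAt_fst
      (fun x y => (hdiff (x, y)).hasFDerivAt.comp_hasDerivAt x
        ((hasDerivAt_id x).prodMk (hasDerivAt_const x y)))
      hF (hF' _) hD hfr
  have hsnd : ∫ p in D, fderiv ℝ F p (0, 1) = 0 :=
    setIntegral_eq_zero_of_hasDerivAt_snd
      (fun x y => (hdiff (x, y)).hasFDerivAt.comp_hasDerivAt y
        ((hasDerivAt_const y x).prodMk (hasDerivAt_id y)))
      hF (hF' _) hD hfr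
  have hv : v = v.1 • (1, 0) + v.2 • (0, 1) := by ext <;> simp
  have hint (c : ℝ) (w : ℝ × ℝ) : IntegrableOn (fun p => c • fderiv ℝ F p w) D :=
    (hF' w).integrableOn.smul c
  calc ∫ p in D, fderiv ℝ F p v
      = ∫ p in D, (v.1 • fderiv ℝ F p (1, 0) + v.2 • fderiv ℝ F p (0, 1)) := by
        simp only [← map_smul, ← map_add, ← hv]
    _ = 0 := by
        rw [integral_add (hint _ _) (hint _ _), integral_smul, integral_smul, hfst, hsnd,
          smul_zero, smul_zero, add_zero]

end IntegrationByParts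

section Hermite

open Polynomial in
lemma H_succ (n : ℕ) : H (n + 1) = C 2 * X * H n - C (2 * n : ℝ) * H (n - 1) := by
  cases n with
  | zero => simp [H]
  | succ n => simp [H]

open Polynomial in
lemma derivative_H (n : ℕ) : derivative (H n) = C (2 * n : ℝ) * H (n - 1) := by
  induction n using Nat.twoStepInduction with
  | zero => simp [H]
  | one => simp [H]
  | more n ih₀ ih₁ =>
    change derivative (H (n + 1 + 1)) = C (2 * (n + 1 + 1 : ℕ) : ℝ) * H (n + 1)
    rw [H_succ (n + 1)]
    simp only [derivative_sub, derivative_mul, derivative_C, derivative_X, ih₁,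
      Nat.add_sub_cancel, ih₀]
    rw [H_succ n]
    simp only [Nat.cast_add, Nat.cast_one, map_add, map_mul, C_1]
    ring

open Polynomial in
lemma eval_neg_H (n : ℕ) (x : ℝ) : (H n).eval (-x) = (-1) ^ n * (H n).eval x := by
  induction n using Nat.twoStepInduction with
  | zero => simp [H]
  | one => simp [H]
  | more n ih₀ ih₁ =>
    simp only [H, eval_sub, eval_mul, eval_C, eval_X, ih₀, ih₁]
    ring

lemma phi_neg (m n : ℕ) (p : ℝ × ℝ) : phi m n (-p) = (-1) ^ (m + n) * phi m n p := by
  simp only [phi, Prod.fst_neg, Prod.snd_neg, eval_neg_H, neg_sq]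
  ring

lemma integrable_eval_mul_exp_neg_sq (q : Polynomial ℝ) :
    Integrable fun x : ℝ => q.eval x * Real.exp (-x ^ 2) := by
  induction q using Polynomial.induction_on' with
  | add q r hq hr =>
    simp only [Polynomial.eval_add, add_mul]
    exact hq.add hr
  | monomial n a =>
    have hn : (-1 : ℝ) < n := neg_one_lt_zero.trans_le n.cast_nonneg
    simpa [mul_assoc] using
      (integrable_rpow_mul_exp_neg_mul_sq (b := 1) one_pos hn).const_mul a

lemma analyticOnNhd_phi (m n : ℕ) : AnalyticOnNhd ℝ (phi m n) Set.univ := by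
  intro p _
  have hfst : AnalyticAt ℝ (fun q : ℝ × ℝ => q.1) p := analyticAt_fst
  have hsnd : AnalyticAt ℝ (fun q : ℝ × ℝ => q.2) p := analyticAt_snd
  have hm : AnalyticAt ℝ (fun q : ℝ × ℝ => (H m).eval q.1) p := by
    simpa using hfst.aeval_polynomial (H m)
  have hn : AnalyticAt ℝ (fun q : ℝ × ℝ => (H n).eval q.2) p := by
    simpa using hsnd.aeval_polynomial (H n)
  exact (hm.mul hn).mul ((hfst.pow 2).add (hsnd.pow 2)).neg.div_const.rexp

lemma continuous_phi (m n : ℕ) : Continuous (phi m n) := by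
  unfold phi
  fun_prop

lemma memLp_phi (m n : ℕ) : MemLp (phi m n) 2 := by
  rw [memLp_two_iff_integrable_sq (continuous_phi m n).aestronglyMeasurable]
  refine ((integrable_eval_mul_exp_neg_sq (H m ^ 2)).mul_prod
    (integrable_eval_mul_exp_neg_sq (H n ^ 2))).congr (.of_forall fun p => ?_)
  have hexp : Real.exp (-(p.1 ^ 2 + p.2 ^ 2) / 2) ^ 2
      = Real.exp (-p.1 ^ 2) * Real.exp (-p.2 ^ 2) := by
    rw [← Real.exp_nat_mul, ← Real.exp_add]
    congr 1
    push_cast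
    ring
  simp only [phi, mul_pow, Polynomial.eval_pow, hexp]
  ring

lemma fderiv_phi (m n : ℕ) (p v : ℝ × ℝ) :
    fderiv ℝ (phi m n) p v = v.1 * (2 * m * phi (m - 1) n p - p.1 * phi m n p)
      + v.2 * (2 * n * phi m (n - 1) p - p.2 * phi m n p) := by
  have hfst : HasFDerivAt (fun q : ℝ × ℝ => q.1) (.fst ℝ ℝ ℝ) p := hasFDerivAt_fst
  have hsnd : HasFDerivAt (fun q : ℝ × ℝ => q.2) (.snd ℝ ℝ ℝ) p := hasFDerivAt_snd
  have hphi := ((((H m).hasDerivAt p.1).comp_hasFDerivAt p hfst).mul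
    (((H n).hasDerivAt p.2).comp_hasFDerivAt p hsnd)).mul
    (((hfst.pow 2).add (hsnd.pow 2)).neg.mul_const (2⁻¹ : ℝ)).exp
  rw [HasFDerivAt.fderiv (f := phi m n) hphi]
  simp [phi, derivative_H, div_eq_mul_inv]
  ring

end Hermite

section LadderOperators

/-- The annihilation operator of the oscillator in the direction `v`, that is `∂_v + ⟨v, ·⟩`. -/
noncomputable def annihilate (v : ℝ × ℝ) (f : ℝ × ℝ → ℝ) : ℝ × ℝ → ℝ := fun p =>
  fderiv ℝ f p v + (v.1 * p.1 + v.2 * p.2) * f p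

/-- The creation operator of the oscillator in the direction `v`, that is `-∂_v + ⟨v, ·⟩`, the
formal adjoint of `annihilate v`. -/
noncomputable def create (v : ℝ × ℝ) (f : ℝ × ℝ → ℝ) : ℝ × ℝ → ℝ := fun p =>
  (v.1 * p.1 + v.2 * p.2) * f p - fderiv ℝ f p v

variable {f g : ℝ × ℝ → ℝ} (v : ℝ × ℝ)

lemma annihilate_zero : annihilate v 0 = 0 := by
  ext p
  simp [annihilate]

lemma annihilate_add (hf : Differentiable ℝ f) (hg : Differentiable ℝ g) :
    annihilate v (f + g) = annihilate v f + annihilate v g := by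
  ext p
  simp only [annihilate, fderiv_add (hf p) (hg p), Pi.add_apply, add_apply]
  ring

lemma annihilate_smul (hf : Differentiable ℝ f) (c : ℝ) :
    annihilate v (c • f) = c • annihilate v f := by
  ext p
  simp only [annihilate, fderiv_const_smul (hf p), Pi.smul_apply, smul_apply,
    smul_eq_mul]
  ring

lemma annihilate_add_create :
    annihilate v f + create v f = fun p => 2 * (v.1 * p.1 + v.2 * p.2) * f p := by
  ext p
  simp only [annihilate, create, Pi.add_apply]
  ring

lemma create_zero : create v 0 = 0 := by
  ext p
  simp [create]

lemma create_add (hf : Differentiable ℝ f) (hg : Differentiable ℝ g) :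
    create v (f + g) = create v f + create v g := by
  ext p
  simp only [create, fderiv_add (hf p) (hg p), Pi.add_apply, add_apply]
  ring

lemma create_smul (hf : Differentiable ℝ f) (c : ℝ) : create v (c • f) = c • create v f := by
  ext p
  simp only [create, fderiv_const_smul (hf p), Pi.smul_apply, smul_apply,
    smul_eq_mul]
  ring

lemma annihilate_phi (m n : ℕ) :
    annihilate v (phi m n) = (v.1 * (2 * m)) • phi (m - 1) n + (v.2 * (2 * n)) • phi m (n - 1) := by
  ext p
  simp only [annihilate, fderiv_phi, Pi.add_apply, Pi.smul_apply, smul_eq_mul]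
  ring

lemma create_phi (m n : ℕ) :
    create v (phi m n) = v.1 • phi (m + 1) n + v.2 • phi m (n + 1) := by
  ext p
  simp only [create, fderiv_phi, Pi.add_apply, Pi.smul_apply, smul_eq_mul]
  simp only [phi, H_succ, Polynomial.eval_sub, Polynomial.eval_mul, Polynomial.eval_C,
    Polynomial.eval_X]
  ring

/-- The finite linear combinations of the functions `φ_{m,n}`: a common domain for the ladder
operators. -/
noncomputable def hermiteSpan : Submodule ℝ (ℝ × ℝ → ℝ) :=
  Submodule.span ℝ (Set.range fun a : ℕ × ℕ => phi a.1 a.2)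

lemma phi_mem_hermiteSpan (m n : ℕ) : phi m n ∈ hermiteSpan :=
  Submodule.subset_span ⟨(m, n), rfl⟩

lemma analyticOnNhd_of_mem_hermiteSpan (hf : f ∈ hermiteSpan) : AnalyticOnNhd ℝ f Set.univ := by
  induction hf using Submodule.span_induction with
  | mem f hf => obtain ⟨a, rfl⟩ := hf; exact analyticOnNhd_phi a.1 a.2
  | zero => exact analyticOnNhd_const
  | add f g _ _ hf hg => exact hf.add hg
  | smul c f _ hf => exact (analyticOnNhd_const (v := c)).smul hf

lemma differentiable_of_mem_hermiteSpan (hf : f ∈ hermiteSpan) : Differentiable ℝ f := fun p =>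
  (analyticOnNhd_of_mem_hermiteSpan hf p trivial).differentiableAt

lemma memLp_of_mem_hermiteSpan (hf : f ∈ hermiteSpan) : MemLp f 2 := by
  induction hf using Submodule.span_induction with
  | mem f hf => obtain ⟨a, rfl⟩ := hf; exact memLp_phi a.1 a.2
  | zero => exact MemLp.zero'
  | add f g _ _ hf hg => exact hf.add hg
  | smul c f _ hf => exact hf.const_smul c

lemma annihilate_mem_hermiteSpan (hf : f ∈ hermiteSpan) : annihilate v f ∈ hermiteSpan := by
  induction hf using Submodule.span_induction with
  | mem f hf =>
    obtain ⟨a, rfl⟩ := hf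
    rw [annihilate_phi]
    exact add_mem (hermiteSpan.smul_mem _ (phi_mem_hermiteSpan _ _))
      (hermiteSpan.smul_mem _ (phi_mem_hermiteSpan _ _))
  | zero => rw [annihilate_zero]; exact hermiteSpan.zero_mem
  | add f g hf hg ihf ihg =>
    rw [annihilate_add v (differentiable_of_mem_hermiteSpan hf)
      (differentiable_of_mem_hermiteSpan hg)]
    exact add_mem ihf ihg
  | smul c f hf ihf =>
    rw [annihilate_smul v (differentiable_of_mem_hermiteSpan hf)]
    exact hermiteSpan.smul_mem c ihf

lemma create_mem_hermiteSpan (hf : f ∈ hermiteSpan) : create v f ∈ hermiteSpan := by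
  induction hf using Submodule.span_induction with
  | mem f hf =>
    obtain ⟨a, rfl⟩ := hf
    rw [create_phi]
    exact add_mem (hermiteSpan.smul_mem _ (phi_mem_hermiteSpan _ _))
      (hermiteSpan.smul_mem _ (phi_mem_hermiteSpan _ _))
  | zero => rw [create_zero]; exact hermiteSpan.zero_mem
  | add f g hf hg ihf ihg =>
    rw [create_add v (differentiable_of_mem_hermiteSpan hf) (differentiable_of_mem_hermiteSpan hg)]
    exact add_mem ihf ihg
  | smul c f hf ihf =>
    rw [create_smul v (differentiable_of_mem_hermiteSpan hf)]
    exact hermiteSpan.smul_mem c ihf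

lemma linear_mul_mem_hermiteSpan (hf : f ∈ hermiteSpan) :
    (fun p => (v.1 * p.1 + v.2 * p.2) * f p) ∈ hermiteSpan := by
  convert hermiteSpan.smul_mem (2⁻¹ : ℝ)
    (add_mem (annihilate_mem_hermiteSpan v hf) (create_mem_hermiteSpan v hf)) using 1
  rw [annihilate_add_create]
  ext p
  simp [mul_assoc]

lemma linear_pow_mul_phi_mem_hermiteSpan (k : ℕ) :
    (fun p => (v.1 * p.1 + v.2 * p.2) ^ k * phi 0 0 p) ∈ hermiteSpan := by
  induction k with
  | zero => simpa using phi_mem_hermiteSpan 0 0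
  | succ k ih => simpa only [pow_succ', mul_assoc] using linear_mul_mem_hermiteSpan v ih

variable {v}

lemma integrable_mul_of_mem_hermiteSpan (hf : f ∈ hermiteSpan) (hg : g ∈ hermiteSpan) :
    Integrable (f * g) :=
  (memLp_of_mem_hermiteSpan hf).integrable_mul (memLp_of_mem_hermiteSpan hg)

lemma setIntegral_annihilate_mul {D : Set (ℝ × ℝ)} (hf : f ∈ hermiteSpan) (hg : g ∈ hermiteSpan)
    (hD : IsOpen D) (hfr : ∀ p ∈ frontier D, f p = 0) :
    ∫ p in D, annihilate v f p * g p = ∫ p in D, f p * create v g p := by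
  have hf' := differentiable_of_mem_hermiteSpan hf
  have hg' := differentiable_of_mem_hermiteSpan hg
  have hfderiv (w p : ℝ × ℝ) :
      fderiv ℝ (f * g) p w = annihilate w f p * g p - f p * create w g p := by
    rw [fderiv_mul (hf' p) (hg' p)]
    simp only [annihilate, create, add_apply, smul_apply,
      smul_eq_mul]
    ring
  have hannihilate (w : ℝ × ℝ) : Integrable fun p => annihilate w f p * g p :=
    integrable_mul_of_mem_hermiteSpan (annihilate_mem_hermiteSpan w hf) hg
  have hcreate (w : ℝ × ℝ) : Integrable fun p => f p * create w g p :=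
    integrable_mul_of_mem_hermiteSpan hf (create_mem_hermiteSpan w hg)
  have hzero := setIntegral_fderiv_apply_eq_zero (hf'.mul hg')
    (integrable_mul_of_mem_hermiteSpan hf hg)
    (fun w => by simp only [hfderiv]; exact (hannihilate w).sub (hcreate w)) hD
    (fun p hp => by simp [hfr p hp]) v
  simp only [hfderiv] at hzero
  rwa [integral_sub (hannihilate v).integrableOn (hcreate v).integrableOn, sub_eq_zero] at hzero

lemma integral_annihilate_mul (hf : f ∈ hermiteSpan) (hg : g ∈ hermiteSpan) :
    ∫ p, annihilate v f p * g p = ∫ p, f p * create v g p := by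
  simpa using setIntegral_annihilate_mul (D := Set.univ) hf hg isOpen_univ (by simp)

lemma create_annihilate_phi_fst (m n : ℕ) :
    create (1, 0) (annihilate (1, 0) (phi m n)) = (2 * m : ℝ) • phi m n := by
  have hdiff := differentiable_of_mem_hermiteSpan (phi_mem_hermiteSpan (m - 1) n)
  have hannihilate : annihilate (1, 0) (phi m n)
      = (2 * m : ℝ) • phi (m - 1) n := by simp [annihilate_phi]
  rw [hannihilate, create_smul _ hdiff, create_phi]
  cases m <;> simp

lemma create_annihilate_phi_snd (m n : ℕ) :
    create (0, 1) (annihilate (0, 1) (phi m n)) = (2 * n : ℝ) • phi m n := by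
  have hdiff := differentiable_of_mem_hermiteSpan (phi_mem_hermiteSpan m (n - 1))
  have hannihilate : annihilate (0, 1) (phi m n)
      = (2 * n : ℝ) • phi m (n - 1) := by simp [annihilate_phi]
  rw [hannihilate, create_smul _ hdiff, create_phi]
  cases n <;> simp

end LadderOperators

section Orthogonality

variable {f g : ℝ × ℝ → ℝ} {v : ℝ × ℝ}

lemma integral_create_annihilate_mul (hf : f ∈ hermiteSpan) (hg : g ∈ hermiteSpan) :
    ∫ p, create v (annihilate v f) p * g p = ∫ p, f p * create v (annihilate v g) p := by
  simp only [mul_comm _ (g _)]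
  rw [← integral_annihilate_mul hg (annihilate_mem_hermiteSpan v hf),
    ← integral_annihilate_mul hf (annihilate_mem_hermiteSpan v hg)]
  simp only [mul_comm]

lemma integral_phi_mul_phi_of_ne {a b : ℕ × ℕ} (hab : a ≠ b) :
    ∫ p, phi a.1 a.2 p * phi b.1 b.2 p = 0 := by
  have ha := phi_mem_hermiteSpan a.1 a.2
  have hb := phi_mem_hermiteSpan b.1 b.2
  have hfst := integral_create_annihilate_mul (v := (1, 0)) ha hb
  have hsnd := integral_create_annihilate_mul (v := (0, 1)) ha hb
  simp only [create_annihilate_phi_fst, create_annihilate_phi_snd, Pi.smul_apply, smul_eq_mul,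
    mul_assoc, mul_left_comm (phi _ _ _), integral_const_mul] at hfst hsnd
  by_contra hne
  have hfst' : (a.1 : ℝ) = b.1 := mul_right_cancel₀ hne (by linarith)
  have hsnd' : (a.2 : ℝ) = b.2 := mul_right_cancel₀ hne (by linarith)
  exact hab (Prod.ext (Nat.cast_injective hfst') (Nat.cast_injective hsnd'))

/-- The squared `L²` norm of `φ_{m,n}`. -/
noncomputable def phiNormSq (m n : ℕ) : ℝ := ∫ p, phi m n p * phi m n p

lemma phiNormSq_succ_left (m n : ℕ) : phiNormSq (m + 1) n = 2 * (m + 1) * phiNormSq m n := by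
  have hcreate : create (1, 0) (phi m n) = phi (m + 1) n := by simp [create_phi]
  have hannihilate : annihilate (1, 0) (phi (m + 1) n) = (2 * (m + 1) : ℝ) • phi m n := by
    simp [annihilate_phi]
  have h := integral_annihilate_mul (v := (1, 0)) (phi_mem_hermiteSpan (m + 1) n)
    (phi_mem_hermiteSpan m n)
  simp only [hcreate, hannihilate, Pi.smul_apply, smul_eq_mul, mul_assoc,
    integral_const_mul] at h
  simp only [phiNormSq, ← h, mul_assoc]

lemma phiNormSq_succ_right (m n : ℕ) : phiNormSq m (n + 1) = 2 * (n + 1) * phiNormSq m n := by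
  have hcreate : create (0, 1) (phi m n) = phi m (n + 1) := by simp [create_phi]
  have hannihilate : annihilate (0, 1) (phi m (n + 1)) = (2 * (n + 1) : ℝ) • phi m n := by
    simp [annihilate_phi]
  have h := integral_annihilate_mul (v := (0, 1)) (phi_mem_hermiteSpan m (n + 1))
    (phi_mem_hermiteSpan m n)
  simp only [hcreate, hannihilate, Pi.smul_apply, smul_eq_mul, mul_assoc,
    integral_const_mul] at h
  simp only [phiNormSq, ← h, mul_assoc]

lemma phi_zero_zero (p : ℝ × ℝ) : phi 0 0 p = Real.exp (-(p.1 ^ 2 + p.2 ^ 2) / 2) := by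
  simp [phi, H]

lemma phi_zero_zero_pos (p : ℝ × ℝ) : 0 < phi 0 0 p := by
  rw [phi_zero_zero]
  exact Real.exp_pos _

lemma phiNormSq_pos (m n : ℕ) : 0 < phiNormSq m n := by
  induction m with
  | zero =>
    induction n with
    | zero =>
      have hpos (p : ℝ × ℝ) : 0 < phi 0 0 p * phi 0 0 p :=
        mul_pos (phi_zero_zero_pos p) (phi_zero_zero_pos p)
      refine (integral_pos_iff_support_of_nonneg (fun p => (hpos p).le)
        ((memLp_phi 0 0).integrable_mul (memLp_phi 0 0))).mpr ?_
      simp [Function.support_eq_univ fun p => (hpos p).ne']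
    | succ n ih => rw [phiNormSq_succ_right]; positivity
  | succ m ih => rw [phiNormSq_succ_left]; positivity

end Orthogonality

section Eigenspace

variable {ℓ : ℕ} {u : ℝ × ℝ → ℝ}

lemma phi_mem_eigenspace (a : ℕ × ℕ) : phi a.1 a.2 ∈ eigenspace (a.1 + a.2) :=
  Submodule.subset_span ⟨a.2, Nat.le_add_left _ _, by rw [Nat.add_sub_cancel]⟩

lemma eigenspace_le_hermiteSpan (ℓ : ℕ) : eigenspace ℓ ≤ hermiteSpan := by
  refine Submodule.span_le.mpr ?_
  rintro _ ⟨j, -, rfl⟩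
  exact phi_mem_hermiteSpan _ _

lemma apply_neg_of_mem_eigenspace (hu : u ∈ eigenspace ℓ) (p : ℝ × ℝ) :
    u (-p) = (-1) ^ ℓ * u p := by
  induction hu using Submodule.span_induction with
  | mem f hf => obtain ⟨j, hj, rfl⟩ := hf; rw [phi_neg, Nat.sub_add_cancel hj]
  | zero => simp
  | add f g _ _ hf hg => simp only [Pi.add_apply, hf, hg, mul_add]
  | smul c f _ hf => simp only [Pi.smul_apply, smul_eq_mul, hf, mul_left_comm]

lemma create_annihilate_of_mem_eigenspace (hu : u ∈ eigenspace ℓ) :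
    create (1, 0) (annihilate (1, 0) u) + create (0, 1) (annihilate (0, 1) u)
      = (2 * ℓ : ℝ) • u := by
  have hdiff {g : ℝ × ℝ → ℝ} (hg : g ∈ eigenspace ℓ) : Differentiable ℝ g :=
    differentiable_of_mem_hermiteSpan (eigenspace_le_hermiteSpan ℓ hg)
  have hdiff' {g : ℝ × ℝ → ℝ} (hg : g ∈ eigenspace ℓ) (v : ℝ × ℝ) :
      Differentiable ℝ (annihilate v g) :=
    differentiable_of_mem_hermiteSpan
      (annihilate_mem_hermiteSpan v (eigenspace_le_hermiteSpan ℓ hg))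
  induction hu using Submodule.span_induction with
  | mem f hf =>
    obtain ⟨j, hj, rfl⟩ := hf
    rw [create_annihilate_phi_fst, create_annihilate_phi_snd, ← add_smul, Nat.cast_sub hj]
    ring_nf
  | zero => simp only [annihilate_zero, create_zero, add_zero, smul_zero]
  | add f g hf hg ihf ihg =>
    simp only [annihilate_add _ (hdiff hf) (hdiff hg), create_add _ (hdiff' hf _) (hdiff' hg _),
      smul_add, ← ihf, ← ihg]
    abel
  | smul c f hf ihf =>
    simp only [annihilate_smul _ (hdiff hf), create_smul _ (hdiff' hf _), ← smul_add, ihf,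
      smul_comm c]

lemma setIntegral_annihilate_sq_of_mem_eigenspace {D : Set (ℝ × ℝ)} (hu : u ∈ eigenspace ℓ)
    (hD : IsOpen D) (hfr : ∀ p ∈ frontier D, u p = 0) :
    (∫ p in D, annihilate (1, 0) u p * annihilate (1, 0) u p)
      + ∫ p in D, annihilate (0, 1) u p * annihilate (0, 1) u p = 2 * ℓ * ∫ p in D, u p * u p := by
  have hu' := eigenspace_le_hermiteSpan ℓ hu
  have hmem (v : ℝ × ℝ) := annihilate_mem_hermiteSpan v hu'
  have hint (v : ℝ × ℝ) : IntegrableOn (fun p => u p * create v (annihilate v u) p) D :=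
    (integrable_mul_of_mem_hermiteSpan hu' (create_mem_hermiteSpan v (hmem v))).integrableOn
  rw [setIntegral_annihilate_mul hu' (hmem _) hD hfr,
    setIntegral_annihilate_mul hu' (hmem _) hD hfr,
    ← integral_add (hint _) (hint _), ← integral_const_mul]
  congr 1 with p
  have h := congrFun (create_annihilate_of_mem_eigenspace hu) p
  simp only [Pi.add_apply, Pi.smul_apply, smul_eq_mul] at h
  rw [← mul_add, h]
  ring

lemma setIntegral_mul_phi_eq_zero_of_odd_add {D : Set (ℝ × ℝ)} {m n : ℕ} (hu : u ∈ eigenspace ℓ)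
    (hD : -D = D) (hDm : MeasurableSet D) (hodd : Odd (ℓ + (m + n))) :
    ∫ p in D, u p * phi m n p = 0 := by
  have hanti (p : ℝ × ℝ) : D.indicator (fun q => u q * phi m n q) (-p)
      = -D.indicator (fun q => u q * phi m n q) p := by
    by_cases hp : p ∈ D
    · have hp' : -p ∈ D := by rwa [← Set.mem_neg, hD]
      have hsign : (-1 : ℝ) ^ ℓ * (-1) ^ (m + n) = -1 := by rw [← pow_add, hodd.neg_one_pow]
      simp only [Set.indicator_of_mem hp, Set.indicator_of_mem hp', phi_neg,
        apply_neg_of_mem_eigenspace hu]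
      linear_combination (u p * phi m n p) * hsign
    · have hp' : -p ∉ D := by rwa [← Set.mem_neg, hD]
      rw [Set.indicator_of_notMem hp, Set.indicator_of_notMem hp', neg_zero]
  have h := integral_neg_eq_self (D.indicator fun q => u q * phi m n q) volume
  simp only [hanti, integral_neg, integral_indicator hDm] at h
  linarith

end Eigenspace

section Completeness

open Complex in
lemma ae_eq_zero_of_integral_mul_cexp_eq_zero {E : Type*} [NormedAddCommGroup E]
    [NormedSpace ℝ E] [CompleteSpace E] [SecondCountableTopology E] [MeasurableSpace E]
    [BorelSpace E] {μ : Measure E} [SigmaFinite μ] {g : E → ℝ} (hg : Integrable g μ)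
    (hzero : ∀ L : StrongDual ℝ E, ∫ p, (g p : ℂ) * cexp (L p * I) ∂μ = 0) : g =ᵐ[μ] 0 := by
  have hpos : AEMeasurable (fun p => ENNReal.ofReal (g p)) μ := hg.aemeasurable.ennreal_ofReal
  have hneg : AEMeasurable (fun p => ENNReal.ofReal (-g p)) μ :=
    hg.aemeasurable.neg.ennreal_ofReal
  have := isFiniteMeasure_withDensity_ofReal hg.2
  have := isFiniteMeasure_withDensity_ofReal hg.neg.2
  have hint {k : E → ℝ} (hk : Integrable k μ) (L : StrongDual ℝ E) :
      Integrable (fun p => (k p : ℂ) * cexp (L p * I)) μ :=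
    hk.ofReal.mul_bdd (c := 1) (Continuous.aestronglyMeasurable (by fun_prop))
      (.of_forall fun p => by rw [norm_exp_ofReal_mul_I])
  have hparts : μ.withDensity (fun p => ENNReal.ofReal (g p))
      = μ.withDensity fun p => ENNReal.ofReal (-g p) := by
    refine Measure.ext_of_charFunDual (funext fun L => ?_)
    rw [charFunDual_apply, charFunDual_apply,
      integral_withDensity_eq_integral_toReal_smul₀ hpos (by simp),
      integral_withDensity_eq_integral_toReal_smul₀ hneg (by simp), ← sub_eq_zero]
    simp only [ENNReal.toReal_ofReal', real_smul]
    rw [← integral_sub (hint hg.pos_part L) (hint hg.neg_part L), ← hzero L]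
    simp only [← sub_mul, ← ofReal_sub, max_zero_sub_max_neg_zero_eq_self]
  filter_upwards [(withDensity_eq_iff_of_sigmaFinite hpos hneg).mp hparts] with p hp
  have hp' : max (g p) 0 = max (-g p) 0 := by
    simpa only [ENNReal.toReal_ofReal'] using congrArg ENNReal.toReal hp
  rw [Pi.zero_apply, ← max_zero_sub_max_neg_zero_eq_self (g p), hp', sub_self]

open Complex in
lemma integral_mul_cexp_eq_zero_of_moments {α : Type*} [MeasurableSpace α] {μ : Measure α}
    {f h : α → ℝ} (hf : AEStronglyMeasurable f μ) (hh : AEStronglyMeasurable h μ)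
    (hint : Integrable (fun x => f x * Real.exp |h x|) μ)
    (hmoment : ∀ k : ℕ, ∫ x, f x * h x ^ k ∂μ = 0) :
    ∫ x, (f x : ℂ) * cexp (h x * I) ∂μ = 0 := by
  set F : ℕ → α → ℂ := fun k x => f x * ((h x * I) ^ k / k.factorial)
  have hFzero (k : ℕ) : ∫ x, F k x ∂μ = 0 := by
    have hF (x : α) : F k x = (I ^ k / k.factorial) * ((f x * h x ^ k : ℝ) : ℂ) := by
      simp only [F, mul_pow]
      push_cast
      ring
    simp only [hF, integral_const_mul, integral_complex_ofReal, hmoment, ofReal_zero, mul_zero]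
  have hbound (x : α) : HasSum (fun k : ℕ => |f x| * (|h x| ^ k / k.factorial))
      (|f x| * Real.exp |h x|) := by
    rw [Real.exp_eq_exp_ℝ]
    exact (NormedSpace.expSeries_div_hasSum_exp |h x|).mul_left |f x|
  have hsum : HasSum (fun k => ∫ x, F k x ∂μ) (∫ x, (f x : ℂ) * cexp (h x * I) ∂μ) := by
    refine hasSum_integral_of_dominated_convergence
      (fun k x => |f x| * (|h x| ^ k / k.factorial)) (fun k => ?_) (fun k => .of_forall fun x => ?_)
      (.of_forall fun x => (hbound x).summable) ?_ (.of_forall fun x => ?_)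
    · fun_prop
    · simp [F]
    · simp only [(hbound _).tsum_eq]
      simpa only [norm_mul, Real.norm_eq_abs, Real.abs_exp] using hint.norm
    · rw [exp_eq_exp_ℂ]
      exact (NormedSpace.expSeries_div_hasSum_exp (h x * I : ℂ)).mul_left (f x : ℂ)
  simp only [hFzero] at hsum
  exact hsum.unique hasSum_zero

lemma memLp_phi_mul_exp_abs_linear (v : ℝ × ℝ) :
    MemLp (fun p => phi 0 0 p * Real.exp |v.1 * p.1 + v.2 * p.2|) 2 := by
  have hgauss : MemLp (fun p : ℝ × ℝ => Real.exp (-(p.1 ^ 2 + p.2 ^ 2) / 4)) 2 := by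
    rw [memLp_two_iff_integrable_sq (Continuous.aestronglyMeasurable (by fun_prop))]
    have hint := integrable_exp_neg_mul_sq (b := 1 / 2) one_half_pos
    refine (hint.mul_prod hint).congr (.of_forall fun p => ?_)
    simp only [← Real.exp_add, ← Real.exp_nat_mul]
    congr 1
    push_cast
    ring
  have hcont := continuous_phi 0 0
  refine (hgauss.const_mul (Real.exp (v.1 ^ 2 + v.2 ^ 2))).mono
    (Continuous.aestronglyMeasurable (by fun_prop)) (.of_forall fun p => ?_)
  simp only [phi_zero_zero, ← Real.exp_add, Real.norm_eq_abs, Real.abs_exp]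
  refine Real.exp_le_exp.mpr ?_
  have habs : |v.1 * p.1 + v.2 * p.2| ≤ v.1 ^ 2 + v.2 ^ 2 + (p.1 ^ 2 + p.2 ^ 2) / 4 := by
    rw [abs_le]
    constructor <;> nlinarith [sq_nonneg (v.1 - p.1 / 2), sq_nonneg (v.2 - p.2 / 2),
      sq_nonneg (v.1 + p.1 / 2), sq_nonneg (v.2 + p.2 / 2)]
  linarith

lemma integral_mul_eq_zero_of_mem_hermiteSpan {f g : ℝ × ℝ → ℝ} (hf : MemLp f 2)
    (hzero : ∀ m n, ∫ p, f p * phi m n p = 0) (hg : g ∈ hermiteSpan) : ∫ p, f p * g p = 0 := by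
  have hint {k : ℝ × ℝ → ℝ} (hk : k ∈ hermiteSpan) : Integrable fun p => f p * k p :=
    hf.integrable_mul (memLp_of_mem_hermiteSpan hk)
  induction hg using Submodule.span_induction with
  | mem g hg => obtain ⟨a, rfl⟩ := hg; exact hzero a.1 a.2
  | zero => simp
  | add g k hg hk ihg ihk =>
    simp only [Pi.add_apply, mul_add]
    rw [integral_add (hint hg) (hint hk), ihg, ihk, add_zero]
  | smul c g _ ihg =>
    simp only [Pi.smul_apply, smul_eq_mul, mul_left_comm _ c, integral_const_mul, ihg, mul_zero]

lemma ae_eq_zero_of_integral_mul_phi_eq_zero {f : ℝ × ℝ → ℝ} (hf : MemLp f 2)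
    (hzero : ∀ m n, ∫ p, f p * phi m n p = 0) : f =ᵐ[volume] 0 := by
  have hgauss := hf.integrable_mul (memLp_phi 0 0)
  have hfourier (L : StrongDual ℝ (ℝ × ℝ)) :
      ∫ p, ((f p * phi 0 0 p : ℝ) : ℂ) * Complex.exp (L p * Complex.I) = 0 := by
    obtain ⟨v, hL⟩ : ∃ v : ℝ × ℝ, ∀ p, L p = v.1 * p.1 + v.2 * p.2 := by
      refine ⟨(L (1, 0), L (0, 1)), fun p => ?_⟩
      have hp : p = p.1 • (1, 0) + p.2 • (0, 1) := by ext <;> simp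
      conv_lhs => rw [hp, map_add, map_smul, map_smul, smul_eq_mul, smul_eq_mul]
      ring
    refine integral_mul_cexp_eq_zero_of_moments hgauss.aestronglyMeasurable
      L.continuous.aestronglyMeasurable ?_ fun k => ?_
    · simp only [hL, mul_assoc]
      exact hf.integrable_mul (memLp_phi_mul_exp_abs_linear v)
    · simp only [hL, mul_assoc, mul_comm (phi 0 0 _)]
      exact integral_mul_eq_zero_of_mem_hermiteSpan hf hzero
        (linear_pow_mul_phi_mem_hermiteSpan v k)
  filter_upwards [ae_eq_zero_of_integral_mul_cexp_eq_zero hgauss hfourier] with p hp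
  exact (mul_eq_zero.mp hp).resolve_right (phi_zero_zero_pos p).ne'

end Completeness

section Parseval

lemma inner_toLp_toLp {α : Type*} [MeasurableSpace α] {μ : Measure α} {f g : α → ℝ}
    (hf : MemLp f 2 μ) (hg : MemLp g 2 μ) :
    inner ℝ (hf.toLp f) (hg.toLp g) = ∫ x, f x * g x ∂μ := by
  rw [L2.inner_def]
  refine integral_congr_ae ?_
  filter_upwards [hf.coeFn_toLp, hg.coeFn_toLp] with x hfx hgx
  rw [hfx, hgx, RCLike.inner_apply, conj_trivial, mul_comm]

/-- The function `φ_{a.1,a.2}`, normalized in `L²(ℝ²)`. -/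
noncomputable def normalizedPhi (a : ℕ × ℕ) : Lp ℝ 2 (volume : Measure (ℝ × ℝ)) :=
  (√(phiNormSq a.1 a.2))⁻¹ • (memLp_phi a.1 a.2).toLp _

lemma inner_toLp_normalizedPhi {f : ℝ × ℝ → ℝ} (hf : MemLp f 2) (a : ℕ × ℕ) :
    inner ℝ (hf.toLp f) (normalizedPhi a)
      = (√(phiNormSq a.1 a.2))⁻¹ * ∫ p, f p * phi a.1 a.2 p := by
  rw [normalizedPhi, inner_smul_right, inner_toLp_toLp]

lemma orthonormal_normalizedPhi : Orthonormal ℝ normalizedPhi := by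
  refine ⟨fun a => ?_, fun a b hab => ?_⟩
  · rw [← sq_eq_sq₀ (norm_nonneg _) zero_le_one, ← real_inner_self_eq_norm_sq, normalizedPhi,
      inner_smul_left, inner_smul_right, inner_toLp_toLp]
    change (√(phiNormSq a.1 a.2))⁻¹ * ((√(phiNormSq a.1 a.2))⁻¹ * phiNormSq a.1 a.2) = 1 ^ 2
    rw [← mul_assoc, ← mul_inv, Real.mul_self_sqrt (phiNormSq_pos _ _).le,
      inv_mul_cancel₀ (phiNormSq_pos _ _).ne', one_pow]
  · change inner ℝ (normalizedPhi a) (normalizedPhi b) = 0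
    rw [normalizedPhi.eq_def a, inner_smul_left, inner_toLp_normalizedPhi,
      integral_phi_mul_phi_of_ne hab, mul_zero, mul_zero]

lemma orthogonal_span_normalizedPhi :
    (Submodule.span ℝ (Set.range normalizedPhi))ᗮ = ⊥ := by
  refine (Submodule.eq_bot_iff _).mpr fun f hf => ?_
  refine Lp.eq_zero_iff_ae_eq_zero.mpr
    (ae_eq_zero_of_integral_mul_phi_eq_zero (Lp.memLp f) fun m n => ?_)
  have hinner := (Submodule.mem_orthogonal' _ _).mp hf (normalizedPhi (m, n))
    (Submodule.subset_span ⟨_, rfl⟩)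
  rw [← Lp.toLp_coeFn f (Lp.memLp f), inner_toLp_normalizedPhi] at hinner
  exact (mul_eq_zero.mp hinner).resolve_left
    (inv_ne_zero (Real.sqrt_pos.mpr (phiNormSq_pos m n)).ne')

/-- The Hermite functions as a Hilbert basis of `L²(ℝ²)`. -/
noncomputable def hermiteBasis :
    HilbertBasis (ℕ × ℕ) ℝ (Lp ℝ 2 (volume : Measure (ℝ × ℝ))) :=
  HilbertBasis.mkOfOrthogonalEqBot orthonormal_normalizedPhi orthogonal_span_normalizedPhi

lemma hasSum_sq_integral_mul_phi {f : ℝ × ℝ → ℝ} (hf : MemLp f 2) :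
    HasSum (fun a : ℕ × ℕ => (∫ p, f p * phi a.1 a.2 p) ^ 2 / phiNormSq a.1 a.2)
      (∫ p, f p * f p) := by
  have hsum := hermiteBasis.hasSum_inner_mul_inner (hf.toLp f) (hf.toLp f)
  rw [inner_toLp_toLp] at hsum
  refine hsum.congr_fun fun a => ?_
  have hbasis : hermiteBasis a = normalizedPhi a := by simp [hermiteBasis]
  rw [hbasis, real_inner_comm (hf.toLp f), inner_toLp_normalizedPhi, ← sq, mul_pow, inv_pow,
    Real.sq_sqrt (phiNormSq_pos _ _).le, div_eq_inv_mul]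

end Parseval

section SpectralCharacterization

variable {ℓ : ℕ} {f g : ℝ × ℝ → ℝ}

lemma hasSum_fst_mul_sq_integral_mul_phi (hg : MemLp g 2)
    (hfg : ∀ m n, ∫ p, g p * phi m n p = ∫ p, f p * phi (m + 1) n p) :
    HasSum (fun a : ℕ × ℕ => 2 * a.1 * ((∫ p, f p * phi a.1 a.2 p) ^ 2 / phiNormSq a.1 a.2))
      (∫ p, g p * g p) := by
  have hinj : Function.Injective (Prod.map Nat.succ id : ℕ × ℕ → ℕ × ℕ) :=
    Nat.succ_injective.prodMap Function.injective_id
  refine (hinj.hasSum_iff fun a ha => ?_).mp ((hasSum_sq_integral_mul_phi hg).congr_fun fun a => ?_)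
  · obtain ⟨_ | m, n⟩ := a
    · simp
    · exact absurd ⟨(m, n), rfl⟩ ha
  · have hpos := phiNormSq_pos a.1 a.2
    simp only [Function.comp_apply, Prod.map_fst, Prod.map_snd, id_eq, Nat.succ_eq_add_one,
      Nat.cast_add_one, hfg, phiNormSq_succ_left]
    field_simp

lemma hasSum_snd_mul_sq_integral_mul_phi (hg : MemLp g 2)
    (hfg : ∀ m n, ∫ p, g p * phi m n p = ∫ p, f p * phi m (n + 1) p) :
    HasSum (fun a : ℕ × ℕ => 2 * a.2 * ((∫ p, f p * phi a.1 a.2 p) ^ 2 / phiNormSq a.1 a.2))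
      (∫ p, g p * g p) := by
  have hinj : Function.Injective (Prod.map id Nat.succ : ℕ × ℕ → ℕ × ℕ) :=
    Function.injective_id.prodMap Nat.succ_injective
  refine (hinj.hasSum_iff fun a ha => ?_).mp ((hasSum_sq_integral_mul_phi hg).congr_fun fun a => ?_)
  · obtain ⟨m, _ | n⟩ := a
    · simp
    · exact absurd ⟨(m, n), rfl⟩ ha
  · have hpos := phiNormSq_pos a.1 a.2
    simp only [Function.comp_apply, Prod.map_fst, Prod.map_snd, id_eq, Nat.succ_eq_add_one,
      Nat.cast_add_one, hfg, phiNormSq_succ_right]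
    field_simp

/-- `gx` and `gy` are the images of the square-integrable function `f` under the annihilation
operators of the two coordinates, in the weak sense of the Hermite coefficients. -/
structure IsWeakAnnihilation (f gx gy : ℝ × ℝ → ℝ) : Prop where
  memLp : MemLp f 2
  memLp_fst : MemLp gx 2
  memLp_snd : MemLp gy 2
  integral_fst_mul_phi (m n : ℕ) : ∫ p, gx p * phi m n p = ∫ p, f p * phi (m + 1) n p
  integral_snd_mul_phi (m n : ℕ) : ∫ p, gy p * phi m n p = ∫ p, f p * phi m (n + 1) p

lemma IsWeakAnnihilation.integral_mul_phi_eq_zero {gx gy : ℝ × ℝ → ℝ}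
    (hf : IsWeakAnnihilation f gx gy)
    (hrayleigh : (∫ p, gx p * gx p) + ∫ p, gy p * gy p = 2 * ℓ * ∫ p, f p * f p)
    (hlow : ∀ m n, m + n < ℓ → ∫ p, f p * phi m n p = 0) {m n : ℕ} (hmn : m + n ≠ ℓ) :
    ∫ p, f p * phi m n p = 0 := by
  set w : ℕ × ℕ → ℝ := fun a => (∫ p, f p * phi a.1 a.2 p) ^ 2 / phiNormSq a.1 a.2
  have hsum : HasSum (fun a : ℕ × ℕ => 2 * ((a.1 : ℝ) + a.2 - ℓ) * w a) 0 := by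
    have h := ((hasSum_fst_mul_sq_integral_mul_phi hf.memLp_fst hf.integral_fst_mul_phi).add
      (hasSum_snd_mul_sq_integral_mul_phi hf.memLp_snd hf.integral_snd_mul_phi)).sub
      ((hasSum_sq_integral_mul_phi hf.memLp).mul_left (2 * ℓ : ℝ))
    rw [hrayleigh, sub_self] at h
    refine h.congr_fun fun a => ?_
    ring
  have hnonneg (a : ℕ × ℕ) : 0 ≤ 2 * ((a.1 : ℝ) + a.2 - ℓ) * w a := by
    rcases lt_or_ge (a.1 + a.2) ℓ with ha | ha
    · simp [w, hlow _ _ ha]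
    · have ha' : (ℓ : ℝ) ≤ a.1 + a.2 := mod_cast ha
      exact mul_nonneg (by linarith) (div_nonneg (sq_nonneg _) (phiNormSq_pos _ _).le)
  have hzero := congrFun ((hasSum_zero_iff_of_nonneg hnonneg).mp hsum) (m, n)
  have hmn' : (m : ℝ) + n - ℓ ≠ 0 := sub_ne_zero.mpr (mod_cast hmn)
  simpa [w, hmn', (phiNormSq_pos m n).ne'] using hzero

lemma integral_sum_smul_phi_mul_phi (s : Finset (ℕ × ℕ)) (c : ℕ × ℕ → ℝ) (b : ℕ × ℕ) :
    ∫ p, (∑ a ∈ s, c a • phi a.1 a.2) p * phi b.1 b.2 p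
      = if b ∈ s then c b * phiNormSq b.1 b.2 else 0 := by
  have hint (a : ℕ × ℕ) : Integrable fun p => c a * (phi a.1 a.2 p * phi b.1 b.2 p) :=
    ((memLp_phi a.1 a.2).integrable_mul (memLp_phi b.1 b.2)).const_mul (c a)
  simp only [Finset.sum_apply, Pi.smul_apply, smul_eq_mul, Finset.sum_mul, mul_assoc]
  rw [integral_finsetSum _ fun a _ => hint a,
    ← Finset.sum_ite_eq' s b fun a => c a * phiNormSq a.1 a.2]
  refine Finset.sum_congr rfl fun a _ => ?_
  rw [integral_const_mul]
  split_ifs with hab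
  · rw [hab, phiNormSq]
  · rw [integral_phi_mul_phi_of_ne hab, mul_zero]

lemma exists_mem_eigenspace_ae_eq (hf : MemLp f 2)
    (hzero : ∀ m n, m + n ≠ ℓ → ∫ p, f p * phi m n p = 0) :
    ∃ w ∈ eigenspace ℓ, f =ᵐ[volume] w := by
  set c : ℕ × ℕ → ℝ := fun a => (∫ p, f p * phi a.1 a.2 p) / phiNormSq a.1 a.2 with hc
  set w : ℝ × ℝ → ℝ := ∑ a ∈ Finset.HasAntidiagonal.antidiagonal ℓ, c a • phi a.1 a.2 with hw
  have hw_mem : w ∈ eigenspace ℓ := by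
    refine Submodule.sum_mem _ fun a ha => Submodule.smul_mem _ _ ?_
    rw [← Finset.HasAntidiagonal.mem_antidiagonal.mp ha]
    exact phi_mem_eigenspace a
  have hwLp := memLp_of_mem_hermiteSpan (eigenspace_le_hermiteSpan ℓ hw_mem)
  refine ⟨w, hw_mem, (ae_eq_zero_of_integral_mul_phi_eq_zero (hf.sub hwLp) fun m n => ?_).mono
    fun p hp => sub_eq_zero.mp hp⟩
  have hint {k : ℝ × ℝ → ℝ} (hk : MemLp k 2) : Integrable fun p => k p * phi m n p :=
    hk.integrable_mul (memLp_phi m n)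
  simp only [Pi.sub_apply, sub_mul]
  rw [integral_sub (hint hf) (hint hwLp), hw, integral_sum_smul_phi_mul_phi _ _ (m, n)]
  split_ifs with hmn
  · simp only [hc]
    rw [div_mul_cancel₀ _ (phiNormSq_pos m n).ne', sub_self]
  · rw [hzero m n (by simpa using hmn), sub_zero]

lemma eq_zero_of_mem_hermiteSpan_of_eqOn_isOpen {U : Set (ℝ × ℝ)} (hf : f ∈ hermiteSpan)
    (hU : IsOpen U) (hU' : U.Nonempty) (hzero : Set.EqOn f 0 U) : f = 0 := by
  obtain ⟨p, hp⟩ := hU'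
  refine funext fun q => ?_
  exact (analyticOnNhd_of_mem_hermiteSpan hf).eqOn_zero_of_preconnected_of_eventuallyEq_zero
    isPreconnected_univ (Set.mem_univ p) (hzero.eventuallyEq_of_mem (hU.mem_nhds hp))
    (Set.mem_univ q)

end SpectralCharacterization

section Counting

/-- The indices of the functions `φ_{m,n}` of the same parity as `E_ℓ` and of smaller energy. -/
def lowerModes (ℓ : ℕ) : Finset (ℕ × ℕ) :=
  {a ∈ Finset.range ℓ ×ˢ Finset.range ℓ | a.1 + a.2 < ℓ ∧ Even (ℓ + (a.1 + a.2))}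

lemma mem_lowerModes {ℓ : ℕ} {a : ℕ × ℕ} :
    a ∈ lowerModes ℓ ↔ a.1 + a.2 < ℓ ∧ Even (ℓ + (a.1 + a.2)) := by
  simp only [lowerModes, Finset.mem_filter, Finset.mem_product, Finset.mem_range]
  exact ⟨And.right, fun h => ⟨by omega, h⟩⟩

lemma lowerModes_add_two (ℓ : ℕ) :
    lowerModes (ℓ + 2) = lowerModes ℓ ∪ Finset.HasAntidiagonal.antidiagonal ℓ := by
  ext a
  simp only [Finset.mem_union, mem_lowerModes, Finset.HasAntidiagonal.mem_antidiagonal,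
    Nat.even_iff]
  omega

lemma card_lowerModes_add_two (ℓ : ℕ) :
    (lowerModes (ℓ + 2)).card = (lowerModes ℓ).card + (ℓ + 1) := by
  have hdisj : Disjoint (lowerModes ℓ) (Finset.HasAntidiagonal.antidiagonal ℓ) :=
    Finset.disjoint_left.mpr fun a ha ha' =>
      (mem_lowerModes.mp ha).1.ne (Finset.HasAntidiagonal.mem_antidiagonal.mp ha')
  rw [lowerModes_add_two, Finset.card_union_of_disjoint hdisj, Finset.Nat.card_antidiagonal]

lemma muL_add_two (ℓ : ℕ) : muL (ℓ + 2) = muL ℓ + 2 * (ℓ + 1) := by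
  have hdiv : (ℓ + 2) / 2 = ℓ / 2 + 1 := Nat.add_div_right ℓ two_pos
  have hsplit := Nat.div_add_mod ℓ 2
  simp only [muL, Nat.add_mod_right, hdiv]
  rcases Nat.mod_two_eq_zero_or_one ℓ with h | h
  · rw [if_pos h, if_pos h]
    linear_combination 2 * hsplit - 2 * h
  · rw [if_neg (by omega), if_neg (by omega)]
    linear_combination 2 * hsplit - 2 * h

lemma two_mul_card_lowerModes_add_one (ℓ : ℕ) : 2 * ((lowerModes ℓ).card + 1) = muL ℓ := by
  induction ℓ using Nat.twoStepInduction with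
  | zero => decide
  | one => decide
  | more ℓ ih _ =>
    rw [card_lowerModes_add_two, muL_add_two, ← ih]
    ring

lemma muL_lt {ℓ : ℕ} (hℓ : 3 ≤ ℓ) : muL ℓ < ℓ * (ℓ + 1) / 2 + 1 := by
  obtain ⟨k, rfl⟩ := Nat.exists_eq_add_of_le' hℓ
  clear hℓ
  induction k using Nat.twoStepInduction with
  | zero => decide
  | one => decide
  | more k ih _ =>
    have hcourant : (k + 3 + 2) * (k + 3 + 2 + 1) / 2
        = (k + 3) * (k + 3 + 1) / 2 + (2 * (k + 3) + 3) := by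
      rw [← Nat.add_mul_div_left _ _ two_pos]
      ring_nf
    rw [show k + 2 + 3 = k + 3 + 2 by ring, muL_add_two, hcourant]
    omega

end Counting

section Gluing

open scoped Function

variable {ι α : Type*}

/-- The function equal to `k i * F` on the piece `D i` and to zero off the pieces (the pieces are
meant to be disjoint). -/
noncomputable def glue [Fintype ι] (D : ι → Set α) (k : ι → ℝ) (F : α → ℝ) : α → ℝ := fun p =>
  ∑ i, k i * (D i).indicator F p

section Integrals

variable [Fintype ι] {D : ι → Set α} {F G : α → ℝ} (k : ι → ℝ)

lemma glue_apply_of_mem (hdisj : Pairwise (Disjoint on D)) {i : ι} {p : α} (hp : p ∈ D i) :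
    glue D k F p = k i * F p := by
  rw [glue, Finset.sum_eq_single i (fun j _ hj => ?_) fun hi => absurd (Finset.mem_univ i) hi,
    Set.indicator_of_mem hp]
  rw [Set.indicator_of_notMem (Set.disjoint_left.mp (hdisj hj.symm) hp), mul_zero]

variable [MeasurableSpace α] {μ : Measure α}

lemma memLp_glue {q : ENNReal} (hD : ∀ i, MeasurableSet (D i)) (hF : MemLp F q μ) :
    MemLp (glue D k F) q μ :=
  memLp_finsetSum _ fun i _ => (hF.indicator (hD i)).const_mul (k i)

lemma integral_glue_mul (hD : ∀ i, MeasurableSet (D i)) (hFG : Integrable (F * G) μ) :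
    ∫ p, glue D k F p * G p ∂μ = ∑ i, k i * ∫ p in D i, F p * G p ∂μ := by
  have hint (i : ι) : Integrable (fun p => k i * (D i).indicator (fun q => F q * G q) p) μ :=
    (hFG.indicator (hD i)).const_mul (k i)
  simp only [glue, Finset.sum_mul, mul_assoc, ← Set.indicator_mul_left]
  rw [integral_finsetSum _ fun i _ => hint i]
  simp only [integral_const_mul, integral_indicator (hD _)]

lemma integral_glue_mul_self (hdisj : Pairwise (Disjoint on D)) (hD : ∀ i, MeasurableSet (D i))
    (hF : MemLp F 2 μ) :
    ∫ p, glue D k F p * glue D k F p ∂μ = ∑ i, k i ^ 2 * ∫ p in D i, F p * F p ∂μ := by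
  rw [integral_glue_mul k hD (hF.integrable_mul (memLp_glue k hD hF))]
  refine Finset.sum_congr rfl fun i _ => ?_
  have hpiece : ∫ p in D i, F p * glue D k F p ∂μ = k i * ∫ p in D i, F p * F p ∂μ := by
    rw [← integral_const_mul]
    refine setIntegral_congr_fun (hD i) fun p hp => ?_
    simp only [glue_apply_of_mem k hdisj hp]
    ring
  rw [hpiece]
  ring

end Integrals

/-- A family of disjoint open pieces whose frontiers lie in the zero set of `u`, none of which is
contained in that zero set. -/
structure IsNodalFamily [TopologicalSpace α] (u : α → ℝ) (D : ι → Set α) : Prop where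
  isOpen (i : ι) : IsOpen (D i)
  exists_ne_zero (i : ι) : ∃ p ∈ D i, u p ≠ 0
  pairwise_disjoint : Pairwise (Disjoint on D)
  eq_zero_of_mem_frontier (i : ι) : ∀ p ∈ frontier (D i), u p = 0

namespace IsNodalFamily

variable {ℓ : ℕ} {u : ℝ × ℝ → ℝ} {D : ι → Set (ℝ × ℝ)}

lemma measurableSet (h : IsNodalFamily u D) (i : ι) : MeasurableSet (D i) :=
  (h.isOpen i).measurableSet

variable [Fintype ι]

lemma isWeakAnnihilation_glue (h : IsNodalFamily u D) (hu : u ∈ hermiteSpan) (k : ι → ℝ) :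
    IsWeakAnnihilation (glue D k u) (glue D k (annihilate (1, 0) u))
      (glue D k (annihilate (0, 1) u)) := by
  have hmem (v : ℝ × ℝ) := annihilate_mem_hermiteSpan v hu
  have hparts (v : ℝ × ℝ) (m n : ℕ) : ∫ p, glue D k (annihilate v u) p * phi m n p
      = ∫ p, glue D k u p * create v (phi m n) p := by
    have hphi := phi_mem_hermiteSpan m n
    rw [integral_glue_mul k h.measurableSet (integrable_mul_of_mem_hermiteSpan (hmem v) hphi),
      integral_glue_mul k h.measurableSet
        (integrable_mul_of_mem_hermiteSpan hu (create_mem_hermiteSpan v hphi))]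
    simp only [setIntegral_annihilate_mul hu hphi (h.isOpen _) (h.eq_zero_of_mem_frontier _)]
  exact
    { memLp := memLp_glue k h.measurableSet (memLp_of_mem_hermiteSpan hu)
      memLp_fst := memLp_glue k h.measurableSet (memLp_of_mem_hermiteSpan (hmem _))
      memLp_snd := memLp_glue k h.measurableSet (memLp_of_mem_hermiteSpan (hmem _))
      integral_fst_mul_phi := fun m n => by simp [hparts, create_phi]
      integral_snd_mul_phi := fun m n => by simp [hparts, create_phi] }

lemma integral_glue_annihilate_sq (h : IsNodalFamily u D) (hu : u ∈ eigenspace ℓ) (k : ι → ℝ) :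
    (∫ p, glue D k (annihilate (1, 0) u) p * glue D k (annihilate (1, 0) u) p)
      + ∫ p, glue D k (annihilate (0, 1) u) p * glue D k (annihilate (0, 1) u) p
      = 2 * ℓ * ∫ p, glue D k u p * glue D k u p := by
  have hu' := eigenspace_le_hermiteSpan ℓ hu
  have hsq {F : ℝ × ℝ → ℝ} (hF : F ∈ hermiteSpan) :=
    integral_glue_mul_self k h.pairwise_disjoint h.measurableSet (memLp_of_mem_hermiteSpan hF)
  rw [hsq (annihilate_mem_hermiteSpan _ hu'), hsq (annihilate_mem_hermiteSpan _ hu'), hsq hu',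
    ← Finset.sum_add_distrib, Finset.mul_sum]
  refine Finset.sum_congr rfl fun i _ => ?_
  rw [← mul_add, setIntegral_annihilate_sq_of_mem_eigenspace hu (h.isOpen i)
    (h.eq_zero_of_mem_frontier i)]
  ring

lemma exists_mem_eigenspace_glue_ae_eq (h : IsNodalFamily u D) (hu : u ∈ eigenspace ℓ)
    (hsymm : ∀ i, -D i = D i)
    {k : ι → ℝ} (hk : ∀ a ∈ lowerModes ℓ, ∫ p, glue D k u p * phi a.1 a.2 p = 0) :
    ∃ w ∈ eigenspace ℓ, glue D k u =ᵐ[volume] w := by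
  have hu' := eigenspace_le_hermiteSpan ℓ hu
  have hlow (m n : ℕ) (hmn : m + n < ℓ) : ∫ p, glue D k u p * phi m n p = 0 := by
    rcases Nat.even_or_odd (ℓ + (m + n)) with heven | hodd
    · exact hk (m, n) (mem_lowerModes.mpr ⟨hmn, heven⟩)
    · rw [integral_glue_mul k h.measurableSet
        (integrable_mul_of_mem_hermiteSpan hu' (phi_mem_hermiteSpan m n))]
      simp only [setIntegral_mul_phi_eq_zero_of_odd_add hu (hsymm _) (h.measurableSet _) hodd,
        mul_zero, Finset.sum_const_zero]
  have hweak := h.isWeakAnnihilation_glue hu' k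
  exact exists_mem_eigenspace_ae_eq hweak.memLp fun m n hmn =>
    hweak.integral_mul_phi_eq_zero (h.integral_glue_annihilate_sq hu k) hlow hmn

lemma eqOn_of_glue_ae_eq (h : IsNodalFamily u D) (hu : u ∈ hermiteSpan) {k : ι → ℝ} {w : ℝ × ℝ → ℝ}
    (hw : w ∈ hermiteSpan) (hae : glue D k u =ᵐ[volume] w) (i : ι) :
    Set.EqOn w (k i • u) (D i) := by
  have hcont {F : ℝ × ℝ → ℝ} (hF : F ∈ hermiteSpan) : ContinuousOn F (D i) :=
    (differentiable_of_mem_hermiteSpan hF).continuous.continuousOn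
  refine Measure.eqOn_open_of_ae_eq (μ := volume) ?_ (h.isOpen i) (hcont hw)
    ((hcont hu).const_smul (k i))
  filter_upwards [ae_restrict_of_ae hae, ae_restrict_mem (h.measurableSet i)] with p hp hpD
  rw [← hp, glue_apply_of_mem k h.pairwise_disjoint hpD, Pi.smul_apply, smul_eq_mul]

lemma eq_zero_of_integral_glue_mul_phi_eq_zero (h : IsNodalFamily u D) (hu : u ∈ eigenspace ℓ)
    (hsymm : ∀ i, -D i = D i)
    {k : ι → ℝ} (hk : ∀ a ∈ lowerModes ℓ, ∫ p, glue D k u p * phi a.1 a.2 p = 0) {i₀ : ι}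
    (hi₀ : k i₀ = 0) : k = 0 := by
  obtain ⟨w, hw, hae⟩ := h.exists_mem_eigenspace_glue_ae_eq hu hsymm hk
  have hw' := eigenspace_le_hermiteSpan ℓ hw
  have heqOn := h.eqOn_of_glue_ae_eq (eigenspace_le_hermiteSpan ℓ hu) hw' hae
  obtain ⟨q, hq, -⟩ := h.exists_ne_zero i₀
  have hwzero : w = 0 :=
    eq_zero_of_mem_hermiteSpan_of_eqOn_isOpen hw' (h.isOpen i₀) ⟨q, hq⟩
      (by simpa [hi₀] using heqOn i₀)
  refine funext fun i => ?_
  obtain ⟨p, hp, hup⟩ := h.exists_ne_zero i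
  have hkp : 0 = k i * u p := by simpa [hwzero] using heqOn i hp
  exact (mul_eq_zero.mp hkp.symm).resolve_right hup

theorem card_le_card_lowerModes_add_one (h : IsNodalFamily u D) (hu : u ∈ eigenspace ℓ)
    (hsymm : ∀ i, -D i = D i) :
    Fintype.card ι ≤ (lowerModes ℓ).card + 1 := by
  rcases isEmpty_or_nonempty ι with hι | ⟨⟨i₀⟩⟩
  · simp
  let coeffs : (ι → ℝ) →ₗ[ℝ] (lowerModes ℓ → ℝ) × ℝ :=
    (LinearMap.pi fun a => Fintype.linearCombination ℝ fun i =>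
      ∫ p in D i, u p * phi a.1.1 a.1.2 p).prod (LinearMap.proj i₀)
  have hinj : Function.Injective coeffs := by
    refine (injective_iff_map_eq_zero coeffs).mpr fun k hk => ?_
    refine h.eq_zero_of_integral_glue_mul_phi_eq_zero hu hsymm (fun a ha => ?_)
      (congrArg Prod.snd hk)
    rw [integral_glue_mul k h.measurableSet (integrable_mul_of_mem_hermiteSpan
      (eigenspace_le_hermiteSpan ℓ hu) (phi_mem_hermiteSpan a.1 a.2))]
    exact congrFun (congrArg Prod.fst hk) ⟨a, ha⟩
  simpa using LinearMap.finrank_le_finrank_of_injective hinj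

end IsNodalFamily

end Gluing

section NodalDomains

open scoped Pointwise

variable {X : Type*} [TopologicalSpace X] {u : X → ℝ} {C C' : Set X} {p : X}

/-- The nodal domains of `u`, so that `mu u` is by definition their number. -/
def nodalDomains (u : X → ℝ) : Set (Set X) :=
  {C | ∃ p, u p ≠ 0 ∧ C = connectedComponentIn {q | u q ≠ 0} p}

lemma exists_ne_zero_of_mem_nodalDomains (hC : C ∈ nodalDomains u) : ∃ p ∈ C, u p ≠ 0 := by
  obtain ⟨p, hp, rfl⟩ := hC
  exact ⟨p, mem_connectedComponentIn hp, hp⟩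

lemma eq_of_mem_nodalDomains (hC : C ∈ nodalDomains u) (hC' : C' ∈ nodalDomains u) (hp : p ∈ C)
    (hp' : p ∈ C') : C = C' := by
  obtain ⟨q, -, rfl⟩ := hC
  obtain ⟨q', -, rfl⟩ := hC'
  rw [connectedComponentIn_eq hp, connectedComponentIn_eq hp']

lemma isOpen_of_mem_nodalDomains [LocallyConnectedSpace X] (hu : Continuous u)
    (hC : C ∈ nodalDomains u) : IsOpen C := by
  obtain ⟨p, -, rfl⟩ := hC
  exact (isOpen_ne_fun hu continuous_const).connectedComponentIn

lemma eq_zero_of_mem_frontier_nodalDomain [LocallyConnectedSpace X] (hu : Continuous u)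
    (hC : C ∈ nodalDomains u) (hp : p ∈ frontier C) : u p = 0 := by
  by_contra hup
  set C' := connectedComponentIn {q | u q ≠ 0} p
  have hC' : C' ∈ nodalDomains u := ⟨p, hup, rfl⟩
  have hpC' : p ∈ C' := mem_connectedComponentIn hup
  obtain ⟨q, hqC', hqC⟩ := mem_closure_iff.mp hp.1 C' (isOpen_of_mem_nodalDomains hu hC') hpC'
  rw [eq_of_mem_nodalDomains hC' hC hqC' hqC] at hpC'
  exact hp.2 (by rwa [(isOpen_of_mem_nodalDomains hu hC).interior_eq])

variable [InvolutiveNeg X]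

/-- The unions `C ∪ -C` of the nodal domains `C` of `u` with their antipodal images. -/
def symmetrizedNodalDomains (u : X → ℝ) : Set (Set X) := (fun C => C ∪ -C) '' nodalDomains u

lemma neg_eq_of_mem_symmetrizedNodalDomains {D : Set X} (hD : D ∈ symmetrizedNodalDomains u) :
    -D = D := by
  obtain ⟨C, -, rfl⟩ := hD
  simp only [Set.union_neg, neg_neg, Set.union_comm]

variable [ContinuousNeg X]

lemma neg_mem_nodalDomains (hsymm : ∀ p, u (-p) = 0 ↔ u p = 0) (hC : C ∈ nodalDomains u) :
    -C ∈ nodalDomains u := by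
  obtain ⟨p, hp, rfl⟩ := hC
  have hneg : -{q | u q ≠ 0} = {q | u q ≠ 0} := Set.ext fun q => (hsymm q).not
  have himage := (Homeomorph.neg X).image_connectedComponentIn (s := {q | u q ≠ 0}) hp
  simp only [Homeomorph.coe_neg, Set.image_neg_eq_neg, hneg] at himage
  exact ⟨-p, (hsymm p).not.mpr hp, himage⟩

lemma eq_or_eq_neg_of_mem_union_neg (hsymm : ∀ p, u (-p) = 0 ↔ u p = 0)
    (hC : C ∈ nodalDomains u) (hC' : C' ∈ nodalDomains u) (hp : p ∈ C ∪ -C)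
    (hp' : p ∈ C' ∪ -C') : C = C' ∨ C = -C' := by
  have hnC := neg_mem_nodalDomains hsymm hC
  have hnC' := neg_mem_nodalDomains hsymm hC'
  rcases hp with hp | hp <;> rcases hp' with hp' | hp'
  · exact .inl (eq_of_mem_nodalDomains hC hC' hp hp')
  · exact .inr (eq_of_mem_nodalDomains hC hnC' hp hp')
  · exact .inr (neg_eq_iff_eq_neg.mp (eq_of_mem_nodalDomains hnC hC' hp hp'))
  · exact .inl (neg_injective (eq_of_mem_nodalDomains hnC hnC' hp hp'))

lemma isNodalFamily_symmetrizedNodalDomains [LocallyConnectedSpace X] (hu : Continuous u)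
    (hsymm : ∀ p, u (-p) = 0 ↔ u p = 0) {S : Set (Set X)}
    (hS : S ⊆ symmetrizedNodalDomains u) : IsNodalFamily u ((↑) : S → Set X) where
  isOpen D := by
    obtain ⟨C, hC, hD⟩ := hS D.2
    rw [← hD]
    exact (isOpen_of_mem_nodalDomains hu hC).union
      (isOpen_of_mem_nodalDomains hu (neg_mem_nodalDomains hsymm hC))
  exists_ne_zero D := by
    obtain ⟨C, hC, hD⟩ := hS D.2
    obtain ⟨p, hp, hup⟩ := exists_ne_zero_of_mem_nodalDomains hC
    exact ⟨p, hD ▸ .inl hp, hup⟩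
  pairwise_disjoint D D' hne := by
    obtain ⟨C, hC, hD⟩ := hS D.2
    obtain ⟨C', hC', hD'⟩ := hS D'.2
    refine Set.disjoint_left.mpr fun p hp hp' => hne (Subtype.ext ?_)
    rw [← hD] at hp
    rw [← hD'] at hp'
    rw [← hD, ← hD']
    rcases eq_or_eq_neg_of_mem_union_neg hsymm hC hC' hp hp' with rfl | rfl
    · rfl
    · simp only [neg_neg, Set.union_comm]
  eq_zero_of_mem_frontier D p hp := by
    obtain ⟨C, hC, hD⟩ := hS D.2
    rw [← hD] at hp
    rcases frontier_union_subset C (-C) hp with ⟨hp, -⟩ | ⟨-, hp⟩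
    · exact eq_zero_of_mem_frontier_nodalDomain hu hC hp
    · exact eq_zero_of_mem_frontier_nodalDomain hu (neg_mem_nodalDomains hsymm hC) hp

lemma card_le_two_mul_card_image_union_neg [DecidableEq (Set X)]
    (hsymm : ∀ p, u (-p) = 0 ↔ u p = 0) {S : Finset (Set X)} (hS : ↑S ⊆ nodalDomains u) :
    S.card ≤ 2 * (S.image fun C => C ∪ -C).card := by
  refine Finset.card_le_mul_card_image S 2 fun D hD => ?_
  obtain ⟨C, hC, rfl⟩ := Finset.mem_image.mp hD
  have hfiber : {C' ∈ S | C' ∪ -C' = C ∪ -C} ⊆ {C, -C} := by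
    intro C' hC'
    obtain ⟨hC'S, hunion⟩ := Finset.mem_filter.mp hC'
    obtain ⟨p, hp, -⟩ := exists_ne_zero_of_mem_nodalDomains (hS hC'S)
    simpa using eq_or_eq_neg_of_mem_union_neg hsymm (hS hC'S) (hS hC) (.inl hp)
      (hunion ▸ .inl hp)
  exact (Finset.card_le_card hfiber).trans Finset.card_le_two

lemma encard_nodalDomains_le (hsymm : ∀ p, u (-p) = 0 ↔ u p = 0) {N : ℕ}
    (hN : ∀ S : Finset (Set X), ↑S ⊆ symmetrizedNodalDomains u → S.card ≤ N) :
    (nodalDomains u).encard ≤ 2 * N := by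
  classical
  by_contra! hlt
  obtain ⟨S, hS, hcard⟩ := Set.exists_subset_encard_eq (Order.add_one_le_of_lt hlt)
  have hfin : S.Finite := Set.finite_of_encard_eq_coe (k := 2 * N + 1) (mod_cast hcard)
  lift S to Finset (Set X) using hfin
  rw [Set.encard_coe_eq_coe_finsetCard] at hcard
  have hcard' : S.card = 2 * N + 1 := by exact_mod_cast hcard
  have himage := hN (S.image fun C => C ∪ -C)
    (by rw [Finset.coe_image]; exact Set.image_mono hS)
  have hle := card_le_two_mul_card_image_union_neg hsymm hS
  omega

end NodalDomains

theorem encard_nodalDomains_le_muL {ℓ : ℕ} {u : ℝ × ℝ → ℝ} (hu : u ∈ eigenspace ℓ) :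
    (nodalDomains u).encard ≤ muL ℓ := by
  have hcont := (differentiable_of_mem_hermiteSpan (eigenspace_le_hermiteSpan ℓ hu)).continuous
  have hsymm (p : ℝ × ℝ) : u (-p) = 0 ↔ u p = 0 := by simp [apply_neg_of_mem_eigenspace hu]
  rw [← two_mul_card_lowerModes_add_one, Nat.cast_mul, Nat.cast_ofNat]
  refine encard_nodalDomains_le hsymm fun S hS => ?_
  simpa using (isNodalFamily_symmetrizedNodalDomains hcont hsymm hS).card_le_card_lowerModes_add_one
    hu fun D => neg_eq_of_mem_symmetrizedNodalDomains (hS D.2)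

/-- **Proposition 6.1.** Every nonzero `u ∈ E_ℓ` satisfies the improved bound
`μ(u) ≤ μ_L(ℓ)`, where `μ_L(2r) = 2(r²+1)` and `μ_L(2r+1) = 2r(r+1)+2`; moreover
`μ_L(ℓ) < ℓ(ℓ+1)/2 + 1` for `ℓ ≥ 3`, and `μ_L(2) = 4` equals the Courant bound. -/
theorem improved_courant_bound (ℓ : ℕ) (u : ℝ × ℝ → ℝ)
    (hu : u ∈ eigenspace ℓ) (hu0 : u ≠ 0) :
    mu u ≤ muL ℓ ∧
    (∀ m : ℕ, 3 ≤ m → muL m < m * (m + 1) / 2 + 1) ∧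
    muL 2 = 2 * (2 + 1) / 2 + 1 := by
  refine ⟨?_, fun m hm => muL_lt hm, by decide⟩
  exact ENat.toNat_le_of_le_natCast (encard_nodalDomains_le_muL hu)
end

section
/- The only Courant sharp eigenvalues of the 2D isotropic quantum harmonic oscillator are 2, 4 and 6. Precisely: (a) for every ℓ ≥ 3 and every nonzero u ∈ E_ℓ, the number of nodal domains satisfies μ(u) < ℓ(ℓ+1)/2 + 1 (strict inequality); (b) for each ℓ ∈ {0,1,2} there exists a nonzero u ∈ E_ℓ whose number of nodal domains equals ℓ(ℓ+1)/2 + 1 (namely 1, 2 and 4 respectively). -/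
/-! The Gaussian weight turns `E_ℓ` into a space of polynomials in `L²` of the Gaussian plane on
which the Ornstein–Uhlenbeck operator `T_θ` acts by `cos θ ^ ℓ`. Cut the complement of the nodal
set of such a polynomial `P` into open cells `W i`, and let `w i` be the restriction of `P` to
`W i`. Since `P` vanishes somewhere on every segment joining two different cells,
`⟪w i, T_θ (w j)⟫` is `o(1 - cos θ)`, and Picone's identity then forces a combination
`Q = ∑ i, a i • w i` orthogonal to all lower eigenspaces to lie in the eigenspace of `P`. If
moreover `a` vanishes on one cell, then `Q = 0` by analyticity, hence `a = 0`: this is Courant's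
argument.

When every cell is symmetric under `x ↦ -x`, orthogonality only has to be imposed against the
Hermite products of lower degree and of the same parity as `P`. There are at most `ℓ² / 4` of them,
so there are at most `ℓ² / 4 + 1` symmetric cells. Grouping each nodal domain with its opposite
produces symmetric cells, whence `μ(u) ≤ ℓ² / 2 + 2`, which is below the Courant bound for `ℓ ≥ 3`.
-/

namespace CourantSharp

open MeasureTheory ProbabilityTheory Filter Topology Set
open scoped NNReal RealInnerProductSpace

/-! ### Hermite polynomials -/

section Hermite

open Polynomial

theorem H_succ (n : ℕ) : H (n + 1) = C 2 * X * H n - C (2 * n : ℝ) * H (n - 1) := by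
  cases n with
  | zero => simp [H]
  | succ n => rw [H]; simp

theorem derivative_H (n : ℕ) : derivative (H n) = C (2 * n : ℝ) * H (n - 1) := by
  induction n using Nat.twoStepInduction with
  | zero => simp [H]
  | one => simp [H]
  | more n ih ih' =>
    rw [H_succ (n + 1), Nat.add_sub_cancel, derivative_sub, derivative_mul, derivative_mul,
      derivative_mul, derivative_C, derivative_C, derivative_X, ih, ih']
    simp only [Nat.add_sub_cancel, H_succ n, Nat.cast_add, map_mul, map_add, map_ofNat,
      map_natCast, Nat.cast_one, Nat.cast_ofNat, map_one,
      show n + 2 - 1 = n + 1 from rfl]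
    ring

theorem eval_H_succ (n : ℕ) (x : ℝ) :
    (H (n + 1)).eval x = 2 * x * (H n).eval x - (derivative (H n)).eval x := by
  simp [H_succ, derivative_H]

theorem mul_eval_H (n : ℕ) (x : ℝ) :
    x * (H n).eval x = 2⁻¹ * (H (n + 1)).eval x + n * (H (n - 1)).eval x := by
  rw [eval_H_succ, derivative_H, eval_mul, eval_C]
  ring

theorem eval_neg_H (n : ℕ) (x : ℝ) : (H n).eval (-x) = (-1) ^ n * (H n).eval x := by
  induction n using Nat.twoStepInduction with
  | zero => simp [H]
  | one => simp [H]
  | more n ih ih' =>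
    simp only [H, eval_sub, eval_mul, eval_C, eval_X, ih, ih']
    ring

end Hermite

/-! ### Gaussian integrals -/

section Temperate

variable {E F : Type*} [NormedAddCommGroup E] [NormedSpace ℝ E] [NormedAddCommGroup F]
  [NormedSpace ℝ F]

theorem hasTemperateGrowth_polynomial_eval (p : Polynomial ℝ) :
    Function.HasTemperateGrowth fun x : ℝ ↦ p.eval x := by
  simp only [Polynomial.eval_eq_sum, Polynomial.sum_def]
  fun_prop

variable [MeasurableSpace E] [BorelSpace E] [SecondCountableTopology E] [CompleteSpace E]

theorem integrable_exp_mul_norm (μ : Measure E) [IsGaussian μ] (b : ℝ) :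
    Integrable (fun x ↦ Real.exp (b * ‖x‖)) μ := by
  obtain ⟨c, hc, hint⟩ := IsGaussian.exists_integrable_exp_sq μ
  refine (hint.const_mul (Real.exp (b ^ 2 / (4 * c)))).mono' (by fun_prop) (ae_of_all _ fun x ↦ ?_)
  rw [Real.norm_eq_abs, Real.abs_exp, ← Real.exp_add, Real.exp_le_exp, ← sub_nonneg]
  calc 0 ≤ c * (‖x‖ - b / (2 * c)) ^ 2 := by positivity
    _ = b ^ 2 / (4 * c) + c * ‖x‖ ^ 2 - b * ‖x‖ := by field_simp; ring

theorem integrable_one_add_norm_pow (μ : Measure E) [IsGaussian μ] (k : ℕ) :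
    Integrable (fun x ↦ (1 + ‖x‖) ^ k) μ := by
  refine (integrable_exp_mul_norm μ k).mono' (by fun_prop) (ae_of_all _ fun x ↦ ?_)
  rw [Real.norm_of_nonneg (by positivity), Real.exp_nat_mul, add_comm]
  gcongr
  exact Real.add_one_le_exp _

theorem memLp_two_of_hasTemperateGrowth {f : E → F} (hf : f.HasTemperateGrowth) (μ : Measure E)
    [IsGaussian μ] : MemLp f 2 μ := by
  obtain ⟨k, C, hC⟩ := hf.2 0
  simp only [norm_iteratedFDeriv_zero] at hC
  have hmeas : AEStronglyMeasurable f μ := hf.1.continuous.aestronglyMeasurable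
  rw [memLp_two_iff_integrable_sq_norm hmeas]
  refine ((integrable_one_add_norm_pow μ (k * 2)).const_mul (C ^ 2)).mono' (by fun_prop)
    (ae_of_all _ fun x ↦ ?_)
  rw [Real.norm_of_nonneg (by positivity), pow_mul, ← mul_pow]
  gcongr
  exact hC x

theorem integrable_of_hasTemperateGrowth {f : E → F} (hf : f.HasTemperateGrowth) (μ : Measure E)
    [IsGaussian μ] : Integrable f μ :=
  (memLp_two_of_hasTemperateGrowth hf μ).integrable one_le_two

end Temperate

section Stein

theorem hasDerivAt_gaussianPDFReal (m : ℝ) {v : ℝ≥0} (hv : v ≠ 0) (x : ℝ) :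
    HasDerivAt (gaussianPDFReal m v) (-((x - m) * gaussianPDFReal m v x / v)) x := by
  have hsq : HasDerivAt (fun y ↦ -(y - m) ^ 2 / (2 * (v : ℝ))) (-(2 * (x - m)) / (2 * v)) x := by
    simpa using ((((hasDerivAt_id x).sub_const m).fun_pow 2).fun_neg).div_const (2 * (v : ℝ))
  refine (hsq.exp.const_mul (Real.sqrt (2 * Real.pi * v))⁻¹).congr_deriv ?_
  simp only [gaussianPDFReal]
  field_simp

theorem integrable_gaussianReal_iff {m : ℝ} {v : ℝ≥0} (hv : v ≠ 0) {f : ℝ → ℝ} :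
    Integrable f (gaussianReal m v) ↔ Integrable fun x ↦ gaussianPDFReal m v x * f x := by
  rw [gaussianReal_of_var_ne_zero m hv, integrable_withDensity_iff_integrable_smul'
    (measurable_gaussianPDF m v) (ae_of_all _ fun _ ↦ gaussianPDF_lt_top)]
  simp [toReal_gaussianPDF]

/-- Stein's lemma: Gaussian integration by parts. -/
theorem integral_sub_mul_gaussianReal {m : ℝ} {v : ℝ≥0} {f f' : ℝ → ℝ}
    (hf : ∀ x, HasDerivAt f (f' x) x) (hint : Integrable f (gaussianReal m v))
    (hint' : Integrable f' (gaussianReal m v))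
    (hmul : Integrable (fun x ↦ (x - m) * f x) (gaussianReal m v)) :
    ∫ x, (x - m) * f x ∂gaussianReal m v = v * ∫ x, f' x ∂gaussianReal m v := by
  rcases eq_or_ne v 0 with rfl | hv
  · simp
  have hv' : (v : ℝ) ≠ 0 := by exact_mod_cast hv
  rw [integrable_gaussianReal_iff hv] at hint hint' hmul
  have hparts := integral_mul_deriv_eq_deriv_mul_of_integrable (fun x _ ↦ hf x)
    (fun x _ ↦ hasDerivAt_gaussianPDFReal m hv x)
    ((hmul.div_const (v : ℝ)).neg.congr (ae_of_all _ fun x ↦ by simp; ring))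
    (hint'.congr (ae_of_all _ fun x ↦ mul_comm _ _)) (hint.congr (ae_of_all _ fun x ↦ mul_comm _ _))
  simp only [integral_gaussianReal_eq_integral_smul hv, smul_eq_mul]
  calc ∫ x, gaussianPDFReal m v x * ((x - m) * f x)
      = ∫ x, -v * (f x * -((x - m) * gaussianPDFReal m v x / v)) := by
        congr with x; field_simp
    _ = v * ∫ x, gaussianPDFReal m v x * f' x := by
        rw [integral_const_mul, hparts]; simp [mul_comm]

end Stein

section Mehler

open Polynomial

theorem integral_mul_eval_add_mul (v : ℝ≥0) (p : ℝ[X]) (x s : ℝ) :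
    ∫ z, z * p.eval (x + s * z) ∂gaussianReal 0 v
      = v * s * ∫ z, (derivative p).eval (x + s * z) ∂gaussianReal 0 v := by
  have htemp (q : ℝ[X]) : Function.HasTemperateGrowth fun z : ℝ ↦ q.eval (x + s * z) :=
    (hasTemperateGrowth_polynomial_eval q).comp (by fun_prop)
  have hderiv (z : ℝ) :
      HasDerivAt (fun z ↦ p.eval (x + s * z)) (s * (derivative p).eval (x + s * z)) z := by
    rw [mul_comm]
    exact (p.hasDerivAt _).comp z (by simpa using ((hasDerivAt_id z).const_mul s).const_add x)
  have hstein := integral_sub_mul_gaussianReal (m := 0) (v := v) hderiv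
    (integrable_of_hasTemperateGrowth (htemp p) _)
    (integrable_of_hasTemperateGrowth (.mul (.const s) (htemp _)) _)
    (integrable_of_hasTemperateGrowth (.mul (by fun_prop) (htemp p)) _)
  simpa only [sub_zero, integral_const_mul, mul_assoc] using hstein

/-- Mehler's formula. -/
theorem integral_eval_H {c s : ℝ} (hcs : c ^ 2 + s ^ 2 = 1) (n : ℕ) (x : ℝ) :
    ∫ z, (H n).eval (c * x + s * z) ∂gaussianReal 0 (1 / 2) = c ^ n * (H n).eval x := by
  have hint (p : ℝ[X]) : Integrable (fun z ↦ p.eval (c * x + s * z)) (gaussianReal 0 (1 / 2)) :=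
    integrable_of_hasTemperateGrowth ((hasTemperateGrowth_polynomial_eval p).comp (by fun_prop)) _
  have hint_mul (p : ℝ[X]) :
      Integrable (fun z ↦ z * p.eval (c * x + s * z)) (gaussianReal 0 (1 / 2)) :=
    integrable_of_hasTemperateGrowth (.mul (by fun_prop)
      ((hasTemperateGrowth_polynomial_eval p).comp (f := fun z ↦ c * x + s * z) (by fun_prop))) _
  induction n using Nat.strong_induction_on with
  | _ n ih =>
    rcases n with _ | n
    · simp [H]
    have hderiv : c ^ 2 * ∫ z, (derivative (H n)).eval (c * x + s * z) ∂gaussianReal 0 (1 / 2)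
        = c ^ (n + 1) * (derivative (H n)).eval x := by
      rcases n with _ | n
      · simp [H]
      · simp only [derivative_H, eval_mul, eval_C, integral_const_mul, Nat.add_sub_cancel,
          ih n (by omega)]
        ring
    calc ∫ z, (H (n + 1)).eval (c * x + s * z) ∂gaussianReal 0 (1 / 2)
        = ∫ z, (2 * c * x * (H n).eval (c * x + s * z) + 2 * s * (z * (H n).eval (c * x + s * z))
            - (derivative (H n)).eval (c * x + s * z)) ∂gaussianReal 0 (1 / 2) := by
          congr with z; rw [eval_H_succ]; ring
      _ = 2 * c * x * (c ^ n * (H n).eval x)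
            - c ^ 2 * ∫ z, (derivative (H n)).eval (c * x + s * z) ∂gaussianReal 0 (1 / 2) := by
          rw [integral_sub (((hint _).const_mul _).fun_add ((hint_mul _).const_mul _)) (hint _),
            integral_add ((hint _).const_mul _) ((hint_mul _).const_mul _),
            integral_const_mul, integral_const_mul, ih n (by omega), integral_mul_eval_add_mul]
          push_cast
          linear_combination (∫ z, (derivative (H n)).eval (c * x + s * z)
            ∂gaussianReal 0 (1 / 2)) * hcs
      _ = c ^ (n + 1) * (H (n + 1)).eval x := by rw [hderiv, eval_H_succ]; ring

end Mehler

/-! ### The Ornstein–Uhlenbeck operator -/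

section CenteredGaussian

variable {E F : Type*} [NormedAddCommGroup E] [NormedSpace ℝ E] [MeasurableSpace E] [BorelSpace E]
  [NormedAddCommGroup F] [NormedSpace ℝ F] [MeasurableSpace F] [BorelSpace F]

/-- A Gaussian measure with mean zero. -/
class IsCenteredGaussian (μ : Measure E) : Prop extends IsGaussian μ where
  integral_id : ∫ x, x ∂μ = 0

instance (v : ℝ≥0) : IsCenteredGaussian (gaussianReal 0 v) := ⟨integral_id_gaussianReal⟩

variable [CompleteSpace E] [SecondCountableTopology E] [CompleteSpace F] [SecondCountableTopology F]

instance (μ : Measure E) (ν : Measure F) [IsCenteredGaussian μ] [IsCenteredGaussian ν] :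
    IsCenteredGaussian (μ.prod ν) where
  integral_id := by
    have hint : Integrable (fun x ↦ x) (μ.prod ν) := IsGaussian.integrable_id
    ext
    · rw [fst_integral hint, integral_fun_fst (fun x : E ↦ x), IsCenteredGaussian.integral_id]
      simp
    · rw [snd_integral hint, integral_fun_snd (fun x : F ↦ x), IsCenteredGaussian.integral_id]
      simp

end CenteredGaussian

section MehlerMap

variable {E : Type*} [NormedAddCommGroup E] [NormedSpace ℝ E]

/-- If `x` and `z` are independent copies of a centered Gaussian vector, then `x` and
`mehlerMap θ (x, z) = cos θ x + sin θ z` are copies with correlation `cos θ`. -/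
noncomputable def mehlerMap (θ : ℝ) (p : E × E) : E := Real.cos θ • p.1 + Real.sin θ • p.2

theorem mehlerMap_zero (p : E × E) : mehlerMap 0 p = p.1 := by simp [mehlerMap]

theorem mehlerMap_pi (p : E × E) : mehlerMap Real.pi p = -p.1 := by simp [mehlerMap]

theorem mehlerMap_rotation_neg (θ : ℝ) (p : E × E) :
    mehlerMap θ (ContinuousLinearMap.rotation (-θ) p) = p.1 := by
  simp only [mehlerMap, ContinuousLinearMap.rotation_apply, Real.cos_neg, Real.sin_neg, neg_neg]
  calc _ = (Real.cos θ ^ 2 + Real.sin θ ^ 2) • p.1 := by module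
    _ = p.1 := by rw [Real.cos_sq_add_sin_sq, one_smul]

theorem mehlerMap_comp_prodMap_neg (θ : ℝ) (p : E × E) :
    mehlerMap (-θ) (p.1, -p.2) = mehlerMap θ p := by simp [mehlerMap]

theorem norm_mehlerMap_le (θ : ℝ) (p : E × E) : ‖mehlerMap θ p‖ ≤ 2 * ‖p‖ :=
  calc ‖mehlerMap θ p‖ ≤ |Real.cos θ| * ‖p.1‖ + |Real.sin θ| * ‖p.2‖ := by
        simpa [mehlerMap, norm_smul] using
          norm_add_le (Real.cos θ • p.1) (Real.sin θ • p.2)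
    _ ≤ 1 * ‖p‖ + 1 * ‖p‖ := by
        gcongr
        exacts [Real.abs_cos_le_one θ, norm_fst_le p, Real.abs_sin_le_one θ, norm_snd_le p]
    _ = 2 * ‖p‖ := by ring

theorem norm_fst_sub_mehlerMap_sq_le (θ : ℝ) (p : E × E) :
    ‖p.1 - mehlerMap θ p‖ ^ 2 ≤ 4 * (1 - Real.cos θ) * ‖p‖ ^ 2 := by
  have hcos : 0 ≤ 1 - Real.cos θ := sub_nonneg.2 (Real.cos_le_one θ)
  have hdecomp : p.1 - mehlerMap θ p = (1 - Real.cos θ) • p.1 + (-Real.sin θ) • p.2 := by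
    simp only [mehlerMap]; module
  calc ‖p.1 - mehlerMap θ p‖ ^ 2 ≤ ((1 - Real.cos θ) * ‖p.1‖ + |Real.sin θ| * ‖p.2‖) ^ 2 := by
        rw [hdecomp]
        gcongr
        refine (norm_add_le _ _).trans_eq ?_
        simp [norm_smul, abs_of_nonneg hcos]
    _ ≤ ((1 - Real.cos θ) * ‖p‖ + |Real.sin θ| * ‖p‖) ^ 2 := by
        gcongr
        exacts [norm_fst_le p, norm_snd_le p]
    _ = ((1 - Real.cos θ) + |Real.sin θ|) ^ 2 * ‖p‖ ^ 2 := by ring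
    _ ≤ 4 * (1 - Real.cos θ) * ‖p‖ ^ 2 := by
        gcongr
        calc ((1 - Real.cos θ) + |Real.sin θ|) ^ 2
            ≤ 2 * ((1 - Real.cos θ) ^ 2 + |Real.sin θ| ^ 2) := add_sq_le
          _ = 4 * (1 - Real.cos θ) := by
              rw [sq_abs, Real.sin_sq]; ring

variable [MeasurableSpace E] [BorelSpace E] [SecondCountableTopology E] [CompleteSpace E]
  (μ : Measure E) [IsCenteredGaussian μ]

theorem measurePreserving_rotation (θ : ℝ) :
    MeasurePreserving (ContinuousLinearMap.rotation θ) (μ.prod μ) (μ.prod μ) :=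
  ⟨by fun_prop, IsGaussian.map_rotation_eq_self (μ := μ) IsCenteredGaussian.integral_id θ⟩

theorem measurePreserving_mehlerMap (θ : ℝ) : MeasurePreserving (mehlerMap θ) (μ.prod μ) μ :=
  measurePreserving_fst.comp (measurePreserving_rotation μ θ)

instance : μ.IsNegInvariant where
  neg_eq_self := by
    calc μ.neg = ((μ.prod μ).map Prod.fst).map (- ·) := by rw [measurePreserving_fst.map_eq]; rfl
      _ = (μ.prod μ).map (mehlerMap Real.pi) := by
        rw [Measure.map_map (by fun_prop) (by fun_prop)]
        congr with p : 1
        exact (mehlerMap_pi p).symm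
      _ = μ := (measurePreserving_mehlerMap μ Real.pi).map_eq

end MehlerMap

section OUOperator

variable {E : Type*} [NormedAddCommGroup E] [NormedSpace ℝ E] [MeasurableSpace E] [BorelSpace E]
  [SecondCountableTopology E] [CompleteSpace E] (μ : Measure E) [IsCenteredGaussian μ]

/-- The Ornstein–Uhlenbeck operator on `L²(μ)`, `f ↦ (x ↦ ∫ z, f (cos θ x + sin θ z) ∂μ)`. It is
parametrised by the angle `θ` rather than by the time `-log (cos θ)`, and it is defined by duality,
so that `⟪f, ouOperator μ θ g⟫ = ∫ (x, z), f x * g (cos θ x + sin θ z) ∂(μ × μ)`. -/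
noncomputable def ouOperator (θ : ℝ) : Lp ℝ 2 μ →L[ℝ] Lp ℝ 2 μ :=
  ((Lp.compMeasurePreservingₗᵢ ℝ Prod.fst
      (measurePreserving_fst (μ := μ) (ν := μ))).toContinuousLinearMap.adjoint).comp
    (Lp.compMeasurePreservingₗᵢ ℝ _ (measurePreserving_mehlerMap μ θ)).toContinuousLinearMap

variable {μ}

theorem inner_ouOperator_toLp (θ : ℝ) {f g : E → ℝ} (hf : MemLp f 2 μ) (hg : MemLp g 2 μ) :
    ⟪hf.toLp f, ouOperator μ θ (hg.toLp g)⟫ = ∫ p, f p.1 * g (mehlerMap θ p) ∂μ.prod μ := by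
  rw [ouOperator, ContinuousLinearMap.comp_apply, ContinuousLinearMap.adjoint_inner_right,
    L2.inner_def]
  refine integral_congr_ae ?_
  filter_upwards [(hf.comp_measurePreserving measurePreserving_fst).coeFn_toLp,
    (hg.comp_measurePreserving (measurePreserving_mehlerMap μ θ)).coeFn_toLp] with p hfp hgp
  rw [← Lp.toLp_compMeasurePreserving hf measurePreserving_fst] at hfp
  rw [← Lp.toLp_compMeasurePreserving hg (measurePreserving_mehlerMap μ θ)] at hgp
  exact (mul_comm _ _).trans (congrArg₂ (· * ·) hfp hgp)

theorem integrable_mul_comp_mehlerMap (θ : ℝ) {f g : E → ℝ} (hf : MemLp f 2 μ)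
    (hg : MemLp g 2 μ) : Integrable (fun p ↦ f p.1 * g (mehlerMap θ p)) (μ.prod μ) :=
  (hf.comp_measurePreserving measurePreserving_fst).integrable_mul
    (hg.comp_measurePreserving (measurePreserving_mehlerMap μ θ))

theorem isSymmetric_ouOperator (θ : ℝ) :
    (ouOperator μ θ : Lp ℝ 2 μ →ₗ[ℝ] Lp ℝ 2 μ).IsSymmetric := by
  intro f g
  -- The involution `(x, z) ↦ (cos θ x + sin θ z, sin θ x - cos θ z)` exchanges `x` and
  -- `mehlerMap θ (x, z)`.
  have hmp : MeasurePreserving (ContinuousLinearMap.rotation (-θ) ∘ Prod.map id (- ·))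
      (μ.prod μ) (μ.prod μ) :=
    (measurePreserving_rotation μ (-θ)).comp
      ((MeasurePreserving.id μ).prod (Measure.measurePreserving_neg μ))
  have hfst (p : E × E) : (ContinuousLinearMap.rotation (-θ) (p.map id (- ·))).1 = mehlerMap θ p :=
    mehlerMap_comp_prodMap_neg θ p
  rw [← Lp.toLp_coeFn f (Lp.memLp f), ← Lp.toLp_coeFn g (Lp.memLp g), real_inner_comm]
  simp only [ContinuousLinearMap.coe_coe, inner_ouOperator_toLp]
  conv_rhs => rw [← hmp.map_eq]
  rw [integral_map hmp.aemeasurable (by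
    rw [hmp.map_eq]
    exact (integrable_mul_comp_mehlerMap θ (Lp.memLp f) (Lp.memLp g)).aestronglyMeasurable)]
  simp [hfst, mehlerMap_rotation_neg, mul_comm]

theorem ouOperator_toLp_eq_smul {θ c : ℝ} {g : E → ℝ} (hg : MemLp g 2 μ)
    (hgc : ∀ x, ∫ z, g (mehlerMap θ (x, z)) ∂μ = c * g x) :
    ouOperator μ θ (hg.toLp g) = c • hg.toLp g := by
  refine ext_inner_left ℝ fun f ↦ ?_
  rw [← Lp.toLp_coeFn f (Lp.memLp f), inner_ouOperator_toLp, inner_smul_right, L2.inner_def,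
    integral_prod _ (integrable_mul_comp_mehlerMap θ (Lp.memLp f) hg), ← integral_const_mul]
  refine integral_congr_ae ?_
  filter_upwards [hg.coeFn_toLp] with x hx
  simp only [integral_const_mul, hgc, Lp.toLp_coeFn, hx, RCLike.inner_apply, conj_trivial]
  ring

end OUOperator

section NearDiagonal

theorem exists_norm_sub_le_of_hasTemperateGrowth {E F : Type*} [NormedAddCommGroup E]
    [NormedSpace ℝ E] [NormedAddCommGroup F] [NormedSpace ℝ F] {f : E → F}
    (hf : f.HasTemperateGrowth) :
    ∃ (k : ℕ) (C : ℝ), 0 ≤ C ∧ ∀ R x y, ‖x‖ ≤ R → ‖y‖ ≤ R →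
      ‖f x - f y‖ ≤ C * (1 + R) ^ k * ‖x - y‖ := by
  obtain ⟨k, C, hC0, hC⟩ := hf.norm_iteratedFDeriv_le_uniform 1
  refine ⟨k, C, hC0, fun R x y hx hy ↦ ?_⟩
  refine (convex_closedBall (0 : E) R).norm_image_sub_le_of_norm_fderiv_le (𝕜 := ℝ)
    (fun z _ ↦ hf.1.differentiable (by simp) z) (fun z hz ↦ ?_) (by simpa using hy)
    (by simpa using hx)
  calc ‖fderiv ℝ f z‖ ≤ C * (1 + ‖z‖) ^ k := by
        simpa [norm_iteratedFDeriv_one] using hC 1 le_rfl z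
    _ ≤ C * (1 + R) ^ k := by gcongr; simpa using hz

variable {E : Type*} [NormedAddCommGroup E] [NormedSpace ℝ E]

theorem exists_abs_indicator_mul_indicator_le {f : E → ℝ} (hf : f.HasTemperateGrowth)
    {U V : Set E} (hUV : ∀ x ∈ U, ∀ y ∈ V, ∃ z ∈ segment ℝ x y, f z = 0) :
    ∃ (k : ℕ) (C : ℝ), 0 ≤ C ∧ ∀ R x y, ‖x‖ ≤ R → ‖y‖ ≤ R →
      |U.indicator f x * V.indicator f y| ≤ C * (1 + R) ^ k * ‖x - y‖ ^ 2 := by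
  obtain ⟨k, C, hC0, hC⟩ := exists_norm_sub_le_of_hasTemperateGrowth hf
  refine ⟨k * 2, C ^ 2, by positivity, fun R x y hx hy ↦ ?_⟩
  have hR : 0 ≤ R := (norm_nonneg x).trans hx
  by_cases hxy : x ∈ U ∧ y ∈ V
  · obtain ⟨z, hz, hfz⟩ := hUV x hxy.1 y hxy.2
    have hzR : ‖z‖ ≤ R := by
      simpa using (convex_closedBall (0 : E) R).segment_subset (by simpa using hx)
        (by simpa using hy) hz
    have hdist := dist_add_dist_of_mem_segment hz
    have habs (w : E) (hw : ‖w‖ ≤ R) (hwz : dist w z ≤ dist x y) :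
        |f w| ≤ C * (1 + R) ^ k * ‖x - y‖ := by
      rw [← dist_eq_norm]
      refine le_trans ?_ (mul_le_mul_of_nonneg_left hwz (by positivity))
      simpa [hfz, dist_eq_norm] using hC R w z hw hzR
    rw [indicator_of_mem hxy.1, indicator_of_mem hxy.2, abs_mul]
    calc |f x| * |f y| ≤ (C * (1 + R) ^ k * ‖x - y‖) * (C * (1 + R) ^ k * ‖x - y‖) := by
          gcongr
          · exact habs x hx (by linarith [dist_nonneg (x := z) (y := y)])
          · exact habs y hy (by linarith [dist_nonneg (x := x) (y := z), dist_comm y z])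
      _ = C ^ 2 * (1 + R) ^ (k * 2) * ‖x - y‖ ^ 2 := by ring
  · have hzero : U.indicator f x * V.indicator f y = 0 := by
      simp only [mul_eq_zero, indicator_apply_eq_zero]; tauto
    rw [hzero, abs_zero]
    positivity

variable [MeasurableSpace E] [BorelSpace E] [SecondCountableTopology E] [CompleteSpace E]
  {μ : Measure E} [IsCenteredGaussian μ]

/-- For disjoint open `U` and `V` the integrand `f x * f (mehlerMap θ (x, z))` is eventually zero as
`θ → 0`; where it is not zero, the zero of `f` between its two arguments makes it `O(1 - cos θ)`. -/
theorem tendsto_inner_ouOperator_indicator_div {f : E → ℝ} (hf : f.HasTemperateGrowth)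
    {U V : Set E} (hU : IsOpen U) (hdisj : Disjoint U V)
    (hUV : ∀ x ∈ U, ∀ y ∈ V, ∃ z ∈ segment ℝ x y, f z = 0)
    (hfU : MemLp (U.indicator f) 2 μ) (hfV : MemLp (V.indicator f) 2 μ) :
    Tendsto (fun θ ↦ ⟪hfU.toLp _, ouOperator μ θ (hfV.toLp _)⟫ / (1 - Real.cos θ)) (𝓝 0) (𝓝 0) := by
  obtain ⟨k, C, hC0, hC⟩ := exists_abs_indicator_mul_indicator_le hf hUV
  simp_rw [inner_ouOperator_toLp, ← integral_div]
  conv => arg 3; rw [← integral_zero (E × E) ℝ (μ := μ.prod μ)]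
  refine tendsto_integral_filter_of_dominated_convergence
    (fun p ↦ C * 2 ^ k * 4 * (1 + ‖p‖) ^ (k + 2)) (Eventually.of_forall fun θ ↦ ?_)
    (Eventually.of_forall fun θ ↦ ae_of_all _ fun p ↦ ?_)
    ((integrable_one_add_norm_pow _ _).const_mul _) (ae_of_all _ fun p ↦ ?_)
  · exact ((integrable_mul_comp_mehlerMap θ hfU hfV).div_const _).aestronglyMeasurable
  · have hcos : 0 ≤ 1 - Real.cos θ := sub_nonneg.2 (Real.cos_le_one θ)
    rw [norm_div, Real.norm_of_nonneg hcos]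
    refine div_le_of_le_mul₀ hcos (by positivity) ?_
    calc |U.indicator f p.1 * V.indicator f (mehlerMap θ p)|
        ≤ C * (1 + 2 * ‖p‖) ^ k * ‖p.1 - mehlerMap θ p‖ ^ 2 :=
          hC _ _ _ (by linarith [norm_fst_le p, norm_nonneg p]) (norm_mehlerMap_le θ p)
      _ ≤ C * (2 * (1 + ‖p‖)) ^ k * (4 * (1 - Real.cos θ) * (1 + ‖p‖) ^ 2) := by
          gcongr
          · linarith
          · refine (norm_fst_sub_mehlerMap_sq_le θ p).trans ?_
            gcongr
            linarith
      _ = C * 2 ^ k * 4 * (1 + ‖p‖) ^ (k + 2) * (1 - Real.cos θ) := by rw [mul_pow]; ring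
  · refine tendsto_const_nhds.congr' ?_
    by_cases hp : p.1 ∈ U
    · have hcont : Continuous fun θ ↦ mehlerMap θ p := by unfold mehlerMap; fun_prop
      filter_upwards [hcont.continuousAt.eventually_mem
        (hU.mem_nhds (by rwa [mehlerMap_zero]) : U ∈ 𝓝 (mehlerMap 0 p))] with θ hθ
      simp [hdisj.notMem_of_mem_left hθ]
    · simp [hp]

end NearDiagonal

/-! ### Rigidity in a Hilbert sum of eigenspaces -/

section HilbertSum

variable {E : Type*} [NormedAddCommGroup E] [InnerProductSpace ℝ E]

theorem exists_ne_zero_forall_inner_sum_smul_eq_zero {ι κ : Type*} [Fintype ι] [Fintype κ]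
    (hcard : Fintype.card κ + 1 < Fintype.card ι) (w : ι → E) (y : κ → E) (i₀ : ι) :
    ∃ a : ι → ℝ, a ≠ 0 ∧ a i₀ = 0 ∧ ∀ k, ⟪∑ i, a i • w i, y k⟫ = 0 := by
  let L : (ι → ℝ) →ₗ[ℝ] (κ → ℝ) × ℝ :=
    ((LinearMap.pi fun k ↦ innerₛₗ ℝ (y k)).comp (Fintype.linearCombination ℝ w)).prod
      (LinearMap.proj i₀)
  obtain ⟨a, haL, ha⟩ := (Submodule.ne_bot_iff _).1
    (LinearMap.ker_ne_bot_of_finrank_lt (f := L) (by simpa using hcard))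
  obtain ⟨horth, ha₀⟩ := Prod.mk.inj (LinearMap.mem_ker.1 haL)
  refine ⟨a, ha, ha₀, fun k ↦ ?_⟩
  rw [real_inner_comm]
  exact congrFun horth k

/-- The discrete Picone identity. -/
theorem mul_inner_self_sub_inner_map_self_eq_sum {ι : Type*} [Fintype ι] {T : E →ₗ[ℝ] E}
    (hT : T.IsSymmetric) {c : ℝ} {w : ι → E} (hw : Pairwise fun i j ↦ ⟪w i, w j⟫ = 0)
    (hc : T (∑ i, w i) = c • ∑ i, w i) (a : ι → ℝ) :
    c * ⟪∑ i, a i • w i, ∑ i, a i • w i⟫ - ⟪∑ i, a i • w i, T (∑ i, a i • w i)⟫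
      = ∑ i, ∑ j, (a i - a j) ^ 2 / 2 * ⟪w i, T (w j)⟫ := by
  have hinner (i : ι) (b : ι → ℝ) : ⟪w i, ∑ j, b j • w j⟫ = b i * ⟪w i, w i⟫ := by
    rw [inner_sum, Finset.sum_eq_single i (fun j _ hj ↦ by rw [inner_smul_right, hw hj.symm,
      mul_zero]) (by simp), inner_smul_right]
  have hrow (i : ι) : ∑ j, ⟪w i, T (w j)⟫ = c * ⟪w i, w i⟫ := by
    rw [← inner_sum, ← map_sum, hc, inner_smul_right]
    simpa using congrArg (c * ·) (hinner i 1)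
  have hcol (j : ι) : ∑ i, ⟪w i, T (w j)⟫ = c * ⟪w j, w j⟫ := by
    simp_rw [← hrow j, ← hT (w _) (w j), real_inner_comm]
  have hdiag : ∑ i, ∑ j, a i ^ 2 / 2 * ⟪w i, T (w j)⟫ = ∑ i, a i ^ 2 / 2 * (c * ⟪w i, w i⟫) := by
    simp_rw [← Finset.mul_sum, hrow]
  have hdiag' : ∑ i, ∑ j, a j ^ 2 / 2 * ⟪w i, T (w j)⟫ = ∑ i, a i ^ 2 / 2 * (c * ⟪w i, w i⟫) := by
    rw [Finset.sum_comm]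
    simp_rw [← Finset.mul_sum, hcol]
  have hnorm : ⟪∑ i, a i • w i, ∑ i, a i • w i⟫ = ∑ i, a i ^ 2 * ⟪w i, w i⟫ := by
    rw [sum_inner]
    simp only [real_inner_smul_left, hinner, ← mul_assoc, sq]
  have hform : ⟪∑ i, a i • w i, T (∑ i, a i • w i)⟫
      = ∑ i, ∑ j, a i * a j * ⟪w i, T (w j)⟫ := by
    rw [sum_inner]
    simp only [map_sum, map_smul, inner_sum, real_inner_smul_left, real_inner_smul_right]
    refine Finset.sum_congr rfl fun i _ ↦ Finset.sum_congr rfl fun j _ ↦ ?_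
    ring
  calc c * ⟪∑ i, a i • w i, ∑ i, a i • w i⟫ - ⟪∑ i, a i • w i, T (∑ i, a i • w i)⟫
      = 2 * (∑ i, a i ^ 2 / 2 * (c * ⟪w i, w i⟫)) - ∑ i, ∑ j, a i * a j * ⟪w i, T (w j)⟫ := by
        rw [hnorm, hform, Finset.mul_sum, Finset.mul_sum]
        congr! 2
        ring
    _ = ∑ i, ∑ j, (a i ^ 2 / 2 * ⟪w i, T (w j)⟫ + a j ^ 2 / 2 * ⟪w i, T (w j)⟫
          - a i * a j * ⟪w i, T (w j)⟫) := by
        simp only [Finset.sum_sub_distrib, Finset.sum_add_distrib, hdiag, hdiag']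
        ring
    _ = ∑ i, ∑ j, (a i - a j) ^ 2 / 2 * ⟪w i, T (w j)⟫ := by
        congr! 2; ring

variable [CompleteSpace E] {V : ℕ → Submodule ℝ E}

theorem inner_map_self_le_of_isHilbertSum
    (hV : IsHilbertSum ℝ (fun k ↦ V k) fun k ↦ (V k).subtypeₗᵢ) {T : E →L[ℝ] E} {c : ℕ → ℝ}
    (hT : ∀ k, ∀ g ∈ V k, T g = c k • g) {C : ℝ} {f : E} (hf : ∀ k, f ∈ (V k)ᗮ ∨ c k ≤ C) :
    ⟪f, T f⟫ ≤ C * ⟪f, f⟫ := by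
  obtain ⟨w, hw⟩ : ∃ w : ∀ k, V k, HasSum (fun k ↦ (w k : E)) f :=
    ⟨_, by simpa using hV.hasSum_linearIsometryEquiv_symm (hV.linearIsometryEquiv f)⟩
  have hself (k : ℕ) : ⟪f, (w k : E)⟫ = ⟪(w k : E), w k⟫ := by
    rw [real_inner_comm]
    refine (hw.mapL (innerSL ℝ (w k : E))).unique (hasSum_single k fun j hj ↦ ?_)
    exact hV.OrthogonalFamily hj.symm (w k) (w j)
  refine hasSum_le (fun k ↦ ?_) ((hw.mapL T).mapL (innerSL ℝ f))
    ((hw.mapL (innerSL ℝ f)).mul_left C)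
  simp only [innerSL_apply_apply, hT k _ (w k).2, inner_smul_right]
  rcases hf k with horth | hle
  · simp [(V k).mem_orthogonal' f |>.1 horth _ (w k).2]
  · rw [hself]
    gcongr
    exact real_inner_self_nonneg

variable [∀ k, CompleteSpace (V k)] {α : Type*} {l : Filter α} [l.NeBot]
  {T : α → E →L[ℝ] E} {r : α → ℝ} {n : ℕ}

theorem mem_of_tendsto_mul_inner_sub_inner_div
    (hV : IsHilbertSum ℝ (fun k ↦ V k) fun k ↦ (V k).subtypeₗᵢ)
    (hsymm : ∀ t, (T t : E →ₗ[ℝ] E).IsSymmetric) (hT : ∀ t k, ∀ g ∈ V k, T t g = r t ^ k • g)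
    (hr : Tendsto r l (𝓝[<] 1)) {v : E} (hv : ∀ k < n, v ∈ (V k)ᗮ)
    (hlim : Tendsto (fun t ↦ (r t ^ n * ⟪v, v⟫ - ⟪v, T t v⟫) / (1 - r t)) l (𝓝 0)) : v ∈ V n := by
  obtain ⟨u, hu, q, hq, rfl⟩ := (V n).exists_add_mem_mem_orthogonal v
  have huq : ⟪u, q⟫ = 0 := (V n).mem_orthogonal q |>.1 hq u hu
  have hq_le (k : ℕ) (hk : k ≤ n) : q ∈ (V k)ᗮ := by
    rcases hk.lt_or_eq with hk | rfl
    · have hu' : u ∈ (V k)ᗮ := (V k).mem_orthogonal u |>.2 fun g hg ↦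
        hV.OrthogonalFamily hk.ne ⟨g, hg⟩ ⟨u, hu⟩
      simpa using (V k)ᗮ.sub_mem (hv k hk) hu'
    · exact hq
  have hdefect (t : α) : r t ^ n * ⟪u + q, u + q⟫ - ⟪u + q, T t (u + q)⟫
      = r t ^ n * ⟪q, q⟫ - ⟪q, T t q⟫ := by
    have huTq : ⟪u, T t q⟫ = 0 := by
      rw [← ContinuousLinearMap.coe_coe, ← hsymm t u q, ContinuousLinearMap.coe_coe, hT t n u hu,
        real_inner_smul_left, huq, mul_zero]
    simp only [map_add, hT t n u hu, inner_add_left, inner_add_right, real_inner_smul_right, huTq,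
      real_inner_comm u q, huq]
    ring
  simp only [hdefect] at hlim
  have hr1 : Tendsto r l (𝓝 1) := hr.mono_right nhdsWithin_le_nhds
  have hlower : ∀ᶠ t in l, r t ^ n * ⟪q, q⟫ ≤ (r t ^ n * ⟪q, q⟫ - ⟪q, T t q⟫) / (1 - r t) := by
    filter_upwards [hr.eventually self_mem_nhdsWithin, hr1.eventually_const_lt one_pos]
      with t (ht1 : r t < 1) ht0
    rw [le_div_iff₀ (sub_pos.2 ht1)]
    have hspec : ⟪q, T t q⟫ ≤ r t ^ (n + 1) * ⟪q, q⟫ :=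
      inner_map_self_le_of_isHilbertSum hV (hT t) fun k ↦ (le_or_gt k n).imp (hq_le k)
        fun hk ↦ pow_le_pow_of_le_one ht0.le ht1.le hk
    linear_combination hspec
  have hq0 : ⟪q, q⟫ ≤ 0 := by
    simpa using le_of_tendsto_of_tendsto ((hr1.pow n).mul_const _) hlim hlower
  rw [real_inner_self_nonpos.1 hq0, add_zero]
  exact hu

theorem sum_smul_mem_of_tendsto_inner_div
    (hV : IsHilbertSum ℝ (fun k ↦ V k) fun k ↦ (V k).subtypeₗᵢ)
    (hsymm : ∀ t, (T t : E →ₗ[ℝ] E).IsSymmetric) (hT : ∀ t k, ∀ g ∈ V k, T t g = r t ^ k • g)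
    (hr : Tendsto r l (𝓝[<] 1)) {ι : Type*} [Fintype ι] {w : ι → E}
    (hw : Pairwise fun i j ↦ ⟪w i, w j⟫ = 0) (hsum : ∑ i, w i ∈ V n)
    (hlim : Pairwise fun i j ↦ Tendsto (fun t ↦ ⟪w i, T t (w j)⟫ / (1 - r t)) l (𝓝 0))
    {a : ι → ℝ} (ha : ∀ k < n, ∑ i, a i • w i ∈ (V k)ᗮ) : ∑ i, a i • w i ∈ V n := by
  refine mem_of_tendsto_mul_inner_sub_inner_div hV hsymm hT hr ha ?_
  have hpicone (t : α) := mul_inner_self_sub_inner_map_self_eq_sum (hsymm t) hw (hT t n _ hsum) a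
  simp only [ContinuousLinearMap.coe_coe] at hpicone
  simp_rw [hpicone, Finset.sum_div, mul_div_assoc]
  suffices h : ∀ i j, Tendsto (fun t ↦ (a i - a j) ^ 2 / 2 * (⟪w i, T t (w j)⟫ / (1 - r t))) l (𝓝 0)
    by simpa using tendsto_finsetSum _ fun i _ ↦ tendsto_finsetSum _ fun j _ ↦ h i j
  intro i j
  rcases eq_or_ne i j with rfl | hij
  · simp
  · simpa using (hlim hij).const_mul ((a i - a j) ^ 2 / 2)

end HilbertSum

/-! ### Completeness of polynomials -/

theorem integral_cexp_mul_eq_zero_of_forall_integral_pow_mul_eq_zero {Ω : Type*}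
    {mΩ : MeasurableSpace Ω} {μ : Measure Ω} {X f : Ω → ℝ} (hX : AEMeasurable X μ)
    (hf : AEStronglyMeasurable f μ) (hexp : Integrable (fun ω ↦ Real.exp |X ω| * f ω) μ)
    (hmoment : ∀ n : ℕ, ∫ ω, X ω ^ n * f ω ∂μ = 0) :
    ∫ ω, Complex.exp (X ω * Complex.I) * f ω ∂μ = 0 := by
  have hXc : AEStronglyMeasurable (fun ω ↦ (X ω : ℂ)) μ :=
    Complex.continuous_ofReal.comp_aestronglyMeasurable hX.aestronglyMeasurable
  have hfc : AEStronglyMeasurable (fun ω ↦ (f ω : ℂ)) μ :=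
    Complex.continuous_ofReal.comp_aestronglyMeasurable hf
  have hterm (n : ℕ) : ∫ ω, (X ω * Complex.I) ^ n / (n.factorial : ℂ) * f ω ∂μ = 0 := by
    calc ∫ ω, (X ω * Complex.I) ^ n / (n.factorial : ℂ) * f ω ∂μ
        = ∫ ω, Complex.I ^ n / (n.factorial : ℂ) * ((X ω ^ n * f ω : ℝ) : ℂ) ∂μ := by
          congr with ω
          push_cast
          ring
      _ = 0 := by rw [integral_const_mul, integral_complex_ofReal, hmoment]; simp
  have htsum (x : ℝ) : Real.exp |x| = ∑' n : ℕ, |x| ^ n / n.factorial := by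
    rw [Real.exp_eq_exp_ℝ, NormedSpace.exp_eq_tsum_div]
  have hsum := hasSum_integral_of_dominated_convergence
    (f := fun ω ↦ Complex.exp (X ω * Complex.I) * (f ω : ℂ))
    (F := fun (n : ℕ) ω ↦ (X ω * Complex.I) ^ n / (n.factorial : ℂ) * (f ω : ℂ))
    (fun n ω ↦ |X ω| ^ n / n.factorial * |f ω|)
    (fun n ↦ by fun_prop)
    (fun n ↦ ae_of_all _ fun ω ↦ by simp)
    (ae_of_all _ fun ω ↦ (Real.summable_pow_div_factorial _).mul_right _)
    (by simpa only [tsum_mul_right, ← htsum, abs_mul, Real.abs_exp] using hexp.abs)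
    (ae_of_all _ fun ω ↦ by
      simpa only [Complex.exp_eq_exp_ℂ] using
        (NormedSpace.expSeries_div_hasSum_exp (X ω * Complex.I)).mul_right (f ω : ℂ))
  refine hsum.unique ?_
  simpa only [hterm] using hasSum_zero

theorem ae_eq_zero_of_forall_integral_cexp_mul_eq_zero {E : Type*} [NormedAddCommGroup E]
    [NormedSpace ℝ E] [CompleteSpace E] [SecondCountableTopology E] [MeasurableSpace E]
    [BorelSpace E] {μ : Measure E} [SigmaFinite μ] {f : E → ℝ} (hf : Integrable f μ)
    (hzero : ∀ L : StrongDual ℝ E, ∫ x, Complex.exp (L x * Complex.I) * f x ∂μ = 0) :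
    f =ᵐ[μ] 0 := by
  have := isFiniteMeasure_withDensity_ofReal hf.2
  have := isFiniteMeasure_withDensity_ofReal hf.neg.2
  have hcharFun (g : E → ℝ) (hg : Integrable g μ) (L : StrongDual ℝ E) :
      charFunDual (μ.withDensity fun x ↦ ENNReal.ofReal (g x)) L
        = ∫ x, Complex.exp (L x * Complex.I) * (max (g x) 0 : ℝ) ∂μ := by
    rw [charFunDual_apply, integral_withDensity_eq_integral_toReal_smul₀
      hg.aestronglyMeasurable.aemeasurable.ennreal_ofReal (by simp)]
    simp only [ENNReal.toReal_ofReal', Complex.real_smul, mul_comm]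
  have hint (g : E → ℝ) (hg : Integrable g μ) (L : StrongDual ℝ E) :
      Integrable (fun x ↦ Complex.exp (L x * Complex.I) * (max (g x) 0 : ℝ)) μ :=
    hg.pos_part.ofReal.bdd_mul (c := 1) (by fun_prop)
      (ae_of_all _ fun x ↦ (Complex.norm_exp_ofReal_mul_I _).le)
  have hdensity : μ.withDensity (fun x ↦ ENNReal.ofReal (f x))
      = μ.withDensity fun x ↦ ENNReal.ofReal ((-f) x) := by
    refine Measure.ext_of_charFunDual (funext fun L ↦ ?_)
    rw [hcharFun f hf, hcharFun (-f) hf.neg, ← sub_eq_zero,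
      ← integral_sub (hint f hf L) (hint (-f) hf.neg L), ← hzero L]
    congr with x
    rw [← mul_sub, ← Complex.ofReal_sub, Pi.neg_apply, max_zero_sub_max_neg_zero_eq_self]
  have hf_meas := hf.aestronglyMeasurable.aemeasurable
  rw [withDensity_eq_iff_of_sigmaFinite hf_meas.ennreal_ofReal
    hf.neg.aestronglyMeasurable.aemeasurable.ennreal_ofReal] at hdensity
  filter_upwards [hdensity] with x hx
  have hpos : max (f x) 0 = max (-f x) 0 := by
    simpa [ENNReal.toReal_ofReal'] using congrArg ENNReal.toReal hx
  simpa [hpos] using (max_zero_sub_max_neg_zero_eq_self (f x)).symm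

/-! ### Hermite spaces of the plane -/

section HermiteSpace

/-- The product `(x, y) ↦ H_a(x) H_b(y)`. -/
noncomputable def hermiteProd (a b : ℕ) (x : ℝ × ℝ) : ℝ := (H a).eval x.1 * (H b).eval x.2

/-- The span of the products `H_a(x) H_b(y)` with `a + b = k`: the eigenspace `E_k` with its
exponential factor removed. -/
noncomputable def hermiteSpace (k : ℕ) : Submodule ℝ (ℝ × ℝ → ℝ) :=
  Submodule.span ℝ ((fun p : ℕ × ℕ ↦ hermiteProd p.1 p.2) '' Finset.HasAntidiagonal.antidiagonal k)

instance (k : ℕ) : FiniteDimensional ℝ (hermiteSpace k) :=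
  FiniteDimensional.span_of_finite ℝ ((Finset.finite_toSet _).image _)

theorem hermiteProd_mem_hermiteSpace (a b : ℕ) : hermiteProd a b ∈ hermiteSpace (a + b) :=
  Submodule.subset_span ⟨(a, b), by simp, rfl⟩

@[elab_as_elim]
theorem hermiteSpace_induction {k : ℕ} {p : (P : ℝ × ℝ → ℝ) → P ∈ hermiteSpace k → Prop}
    (prod : ∀ a b (hab : a + b = k), p (hermiteProd a b) (hab ▸ hermiteProd_mem_hermiteSpace a b))
    (zero : p 0 (zero_mem _))
    (add : ∀ P Q hP hQ, p P hP → p Q hQ → p (P + Q) (add_mem hP hQ))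
    (smul : ∀ (c : ℝ) P hP, p P hP → p (c • P) (Submodule.smul_mem _ c hP))
    {P : ℝ × ℝ → ℝ} (hP : P ∈ hermiteSpace k) : p P hP := by
  induction hP using Submodule.span_induction with
  | mem P hP =>
    obtain ⟨⟨a, b⟩, hab, rfl⟩ := hP
    exact prod a b (by simpa using hab)
  | zero => exact zero
  | add P Q hP hQ hpP hpQ => exact add P Q hP hQ hpP hpQ
  | smul c P hP hpP => exact smul c P hP hpP

theorem one_mem_hermiteSpace_zero : (1 : ℝ × ℝ → ℝ) ∈ hermiteSpace 0 := by
  convert hermiteProd_mem_hermiteSpace 0 0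
  ext x
  simp [hermiteProd, H]

variable {k : ℕ} {P : ℝ × ℝ → ℝ}

theorem hasTemperateGrowth_of_mem_hermiteSpace (hP : P ∈ hermiteSpace k) :
    P.HasTemperateGrowth := by
  induction hP using hermiteSpace_induction with
  | prod a b _ =>
    exact ((hasTemperateGrowth_polynomial_eval (H a)).comp
      (ContinuousLinearMap.fst ℝ ℝ ℝ).hasTemperateGrowth).mul
        ((hasTemperateGrowth_polynomial_eval (H b)).comp
          (ContinuousLinearMap.snd ℝ ℝ ℝ).hasTemperateGrowth)
  | zero => exact Function.HasTemperateGrowth.const 0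
  | add P Q _ _ hP hQ => exact hP.add hQ
  | smul c P _ hP => exact (Function.HasTemperateGrowth.const c).mul hP

theorem continuous_of_mem_hermiteSpace (hP : P ∈ hermiteSpace k) : Continuous P :=
  (hasTemperateGrowth_of_mem_hermiteSpace hP).1.continuous

theorem analyticOnNhd_of_mem_hermiteSpace (hP : P ∈ hermiteSpace k) : AnalyticOnNhd ℝ P univ := by
  induction hP using hermiteSpace_induction with
  | prod a b _ =>
    exact (analyticOnNhd_fst.aeval_polynomial (H a)).mul (analyticOnNhd_snd.aeval_polynomial (H b))
  | zero => exact analyticOnNhd_const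
  | add P Q _ _ hP hQ => exact hP.add hQ
  | smul c P _ hP => exact hP.const_smul

theorem apply_neg_of_mem_hermiteSpace (hP : P ∈ hermiteSpace k) (x : ℝ × ℝ) :
    P (-x) = (-1) ^ k * P x := by
  induction hP using hermiteSpace_induction with
  | prod a b hab =>
    simp only [hermiteProd, Prod.fst_neg, Prod.snd_neg, eval_neg_H, ← hab, pow_add]
    ring
  | zero => simp
  | add P Q _ _ hP hQ => simp only [Pi.add_apply, hP, hQ]; ring
  | smul c P _ hP => simp only [Pi.smul_apply, smul_eq_mul, hP]; ring

theorem coe_mul_mem_iSup_hermiteSpace (L : ℝ × ℝ →ₗ[ℝ] ℝ) (hP : P ∈ ⨆ k, hermiteSpace k) :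
    ⇑L * P ∈ ⨆ k, hermiteSpace k := by
  have hmem (a b : ℕ) : hermiteProd a b ∈ ⨆ k, hermiteSpace k :=
    Submodule.mem_iSup_of_mem _ (hermiteProd_mem_hermiteSpace a b)
  suffices h : ⨆ k, hermiteSpace k ≤ (⨆ k, hermiteSpace k).comap (LinearMap.mulLeft ℝ ⇑L) from h hP
  refine iSup_le fun k P hP ↦ ?_
  induction hP using hermiteSpace_induction with
  | prod a b _ =>
    have hL : LinearMap.mulLeft ℝ ⇑L (hermiteProd a b)
        = L (1, 0) • ((2⁻¹ : ℝ) • hermiteProd (a + 1) b + (a : ℝ) • hermiteProd (a - 1) b)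
          + L (0, 1) • ((2⁻¹ : ℝ) • hermiteProd a (b + 1) + (b : ℝ) • hermiteProd a (b - 1)) := by
      ext x
      have hx : L x = x.1 * L (1, 0) + x.2 * L (0, 1) := by
        simp only [← smul_eq_mul, ← map_smul, ← map_add]
        simp
      simp only [LinearMap.mulLeft_apply, Pi.mul_apply, Pi.add_apply, Pi.smul_apply, smul_eq_mul,
        hermiteProd]
      linear_combination (H a).eval x.1 * (H b).eval x.2 * hx
        + L (1, 0) * (H b).eval x.2 * mul_eval_H a x.1
        + L (0, 1) * (H a).eval x.1 * mul_eval_H b x.2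
    rw [Submodule.mem_comap, hL]
    refine add_mem (Submodule.smul_mem _ _ ?_) (Submodule.smul_mem _ _ ?_) <;>
      exact add_mem (Submodule.smul_mem _ _ (hmem _ _)) (Submodule.smul_mem _ _ (hmem _ _))
  | zero => exact zero_mem _
  | add P Q _ _ hP hQ => exact add_mem hP hQ
  | smul c P _ hP => exact Submodule.smul_mem _ c hP

theorem coe_pow_mem_iSup_hermiteSpace (L : ℝ × ℝ →ₗ[ℝ] ℝ) (n : ℕ) :
    ⇑L ^ n ∈ ⨆ k, hermiteSpace k := by
  induction n with
  | zero => exact Submodule.mem_iSup_of_mem 0 one_mem_hermiteSpace_zero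
  | succ n ih =>
    rw [pow_succ']
    exact coe_mul_mem_iSup_hermiteSpace L ih

end HermiteSpace

section HermiteL2

/-- The centered Gaussian measure of the plane with density `π⁻¹ exp (-(x² + y²))`. -/
noncomputable abbrev planeGaussian : Measure (ℝ × ℝ) :=
  (gaussianReal 0 (1 / 2)).prod (gaussianReal 0 (1 / 2))

instance : planeGaussian.IsOpenPosMeasure :=
  have : (gaussianReal 0 (1 / 2)).IsOpenPosMeasure :=
    (gaussianReal_absolutelyContinuous' 0 (v := 1 / 2) (by simp)).isOpenPosMeasure
  inferInstance

variable {k l : ℕ} {P Q : ℝ × ℝ → ℝ}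

theorem integral_comp_mehlerMap_of_mem_hermiteSpace (θ : ℝ) (hP : P ∈ hermiteSpace k)
    (x : ℝ × ℝ) : ∫ z, P (mehlerMap θ (x, z)) ∂planeGaussian = Real.cos θ ^ k * P x := by
  induction hP using hermiteSpace_induction with
  | prod a b hab =>
    have hcs := Real.cos_sq_add_sin_sq θ
    simp only [hermiteProd, mehlerMap, Prod.fst_add, Prod.snd_add, Prod.smul_fst, Prod.smul_snd,
      smul_eq_mul]
    rw [integral_prod_mul (fun s ↦ (H a).eval (Real.cos θ * x.1 + Real.sin θ * s))
      fun s ↦ (H b).eval (Real.cos θ * x.2 + Real.sin θ * s), integral_eval_H hcs,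
      integral_eval_H hcs, ← hab, pow_add]
    ring
  | zero => simp
  | add P Q hPk hQk hP hQ =>
    have hint {R : ℝ × ℝ → ℝ} (hR : R ∈ hermiteSpace k) :
        Integrable (fun z ↦ R (mehlerMap θ (x, z))) planeGaussian :=
      integrable_of_hasTemperateGrowth ((hasTemperateGrowth_of_mem_hermiteSpace hR).comp
        (by unfold mehlerMap; fun_prop)) _
    simp only [Pi.add_apply]
    rw [integral_add (hint hPk) (hint hQk), hP, hQ, mul_add]
  | smul c P _ hP =>
    simp only [Pi.smul_apply, smul_eq_mul]
    rw [integral_const_mul, hP]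
    ring

theorem memLp_two_of_mem_hermiteSpace (hP : P ∈ hermiteSpace k) : MemLp P 2 planeGaussian :=
  memLp_two_of_hasTemperateGrowth (hasTemperateGrowth_of_mem_hermiteSpace hP) _

/-- The image of `hermiteSpace k` in the Gaussian `L²` space. -/
noncomputable def hermiteLp (k : ℕ) : Submodule ℝ (Lp ℝ 2 planeGaussian) :=
  LinearMap.range
    ({ toFun P := (memLp_two_of_mem_hermiteSpace P.2).toLp P
       map_add' _ _ := rfl
       map_smul' c P := MemLp.toLp_const_smul c (memLp_two_of_mem_hermiteSpace P.2) } :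
      hermiteSpace k →ₗ[ℝ] Lp ℝ 2 planeGaussian)

instance (k : ℕ) : FiniteDimensional ℝ (hermiteLp k) := by
  unfold hermiteLp; infer_instance

theorem toLp_mem_hermiteLp (hP : P ∈ hermiteSpace k) :
    (memLp_two_of_mem_hermiteSpace hP).toLp P ∈ hermiteLp k := ⟨⟨P, hP⟩, rfl⟩

theorem exists_toLp_eq_of_mem_hermiteLp {g : Lp ℝ 2 planeGaussian} (hg : g ∈ hermiteLp k) :
    ∃ P, ∃ hP : P ∈ hermiteSpace k, (memLp_two_of_mem_hermiteSpace hP).toLp P = g := by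
  obtain ⟨⟨P, hP⟩, rfl⟩ := hg
  exact ⟨P, hP, rfl⟩

theorem ouOperator_eq_smul_of_mem_hermiteLp (θ : ℝ) {g : Lp ℝ 2 planeGaussian}
    (hg : g ∈ hermiteLp k) : ouOperator planeGaussian θ g = Real.cos θ ^ k • g := by
  obtain ⟨P, hP, rfl⟩ := exists_toLp_eq_of_mem_hermiteLp hg
  exact ouOperator_toLp_eq_smul _ (integral_comp_mehlerMap_of_mem_hermiteSpace θ hP)

theorem isOrtho_hermiteLp (hkl : k ≠ l) : hermiteLp k ⟂ hermiteLp l := by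
  rw [Submodule.isOrtho_iff_inner_eq]
  intro f hf g hg
  have hsymm := isSymmetric_ouOperator (μ := planeGaussian) (Real.pi / 3) f g
  simp only [ContinuousLinearMap.coe_coe, ouOperator_eq_smul_of_mem_hermiteLp _ hf,
    ouOperator_eq_smul_of_mem_hermiteLp _ hg, real_inner_smul_left, real_inner_smul_right,
    Real.cos_pi_div_three] at hsymm
  by_contra hne
  exact hkl (pow_right_injective₀ (by norm_num) (by norm_num) (mul_right_cancel₀ hne hsymm))

theorem integral_mul_eq_zero_of_mem_iSup_hermiteSpace {f : Lp ℝ 2 planeGaussian}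
    (hf : ∀ k, f ∈ (hermiteLp k)ᗮ) (hP : P ∈ ⨆ k, hermiteSpace k) :
    ∫ x, P x * f x ∂planeGaussian = 0 := by
  suffices h : ∃ hP : MemLp P 2 planeGaussian, ⟪f, hP.toLp P⟫ = 0 by
    obtain ⟨hP, horth⟩ := h
    rw [← horth, L2.inner_def]
    refine integral_congr_ae ?_
    filter_upwards [hP.coeFn_toLp] with x hx
    simp [hx]
  induction hP using Submodule.iSup_induction' with
  | mem k P hP =>
    exact ⟨_, (hermiteLp k).mem_orthogonal' f |>.1 (hf k) _ (toLp_mem_hermiteLp hP)⟩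
  | zero => exact ⟨MemLp.zero, inner_zero_right f⟩
  | add P Q _ _ hP hQ =>
    obtain ⟨hP, hfP⟩ := hP
    obtain ⟨hQ, hfQ⟩ := hQ
    exact ⟨hP.add hQ, by rw [MemLp.toLp_add hP hQ, inner_add_right, hfP, hfQ, add_zero]⟩

theorem eq_zero_of_forall_mem_orthogonal_hermiteLp {f : Lp ℝ 2 planeGaussian}
    (hf : ∀ k, f ∈ (hermiteLp k)ᗮ) : f = 0 := by
  rw [Lp.eq_zero_iff_ae_eq_zero]
  have hmeas : AEStronglyMeasurable f planeGaussian := Lp.aestronglyMeasurable f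
  refine ae_eq_zero_of_forall_integral_cexp_mul_eq_zero
    ((Lp.memLp f).integrable one_le_two) fun L ↦ ?_
  refine integral_cexp_mul_eq_zero_of_forall_integral_pow_mul_eq_zero (by fun_prop) hmeas ?_
    fun n ↦ integral_mul_eq_zero_of_mem_iSup_hermiteSpace hf
      (coe_pow_mem_iSup_hermiteSpace (L : ℝ × ℝ →ₗ[ℝ] ℝ) n)
  have hexp : MemLp (fun x ↦ Real.exp |L x|) 2 planeGaussian := by
    rw [memLp_two_iff_integrable_sq (by fun_prop)]
    refine (integrable_exp_mul_norm planeGaussian (2 * ‖L‖)).mono' (by fun_prop)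
      (ae_of_all _ fun x ↦ ?_)
    rw [Real.norm_of_nonneg (sq_nonneg _), ← Real.exp_nat_mul, mul_assoc, Nat.cast_ofNat]
    gcongr
    exact L.le_opNorm x
  exact hexp.integrable_mul (Lp.memLp f)

theorem isHilbertSum_hermiteLp :
    IsHilbertSum ℝ (fun k ↦ hermiteLp k) fun k ↦ (hermiteLp k).subtypeₗᵢ := by
  refine IsHilbertSum.mkInternal _
    (OrthogonalFamily.of_pairwise fun k l hkl ↦ isOrtho_hermiteLp hkl) ?_
  rw [top_le_iff, Submodule.topologicalClosure_eq_top_iff, eq_bot_iff]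
  intro f hf
  exact eq_zero_of_forall_mem_orthogonal_hermiteLp fun k ↦
    Submodule.orthogonal_le (le_iSup _ k) hf

end HermiteL2

/-! ### Open partitions and connected components -/

section OpenPartition

variable {X ι κ : Type*} [TopologicalSpace X] {W : ι → Set X} {U : Set X}

/-- A partition of `U` into nonempty open cells `W i`. The nodal domains of a continuous function
are such a partition of the complement of its nodal set, but the cells need not be connected. -/
structure IsOpenPartition (W : ι → Set X) (U : Set X) : Prop where
  isOpen (i : ι) : IsOpen (W i)
  nonempty (i : ι) : (W i).Nonempty
  disjoint : Pairwise (Function.onFun Disjoint W)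
  iUnion_eq : ⋃ i, W i = U

/-- The set of connected components of `U`. -/
def componentsIn (U : Set X) : Set (Set X) := {C | ∃ x ∈ U, C = connectedComponentIn U x}

namespace IsOpenPartition

theorem subset (hW : IsOpenPartition W U) (i : ι) : W i ⊆ U :=
  hW.iUnion_eq ▸ subset_iUnion W i

theorem exists_mem (hW : IsOpenPartition W U) {x : X} (hx : x ∈ U) : ∃ i, x ∈ W i :=
  mem_iUnion.1 (hW.iUnion_eq.symm ▸ hx)

theorem eq_of_mem (hW : IsOpenPartition W U) {x : X} {i j : ι} (hi : x ∈ W i) (hj : x ∈ W j) :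
    i = j :=
  hW.disjoint.eq (not_disjoint_iff.2 ⟨x, hi, hj⟩)

theorem injective (hW : IsOpenPartition W U) : Function.Injective W := fun i _ hij ↦
  have ⟨_, hx⟩ := hW.nonempty i
  hW.eq_of_mem hx (hij ▸ hx)

theorem iUnion_fiber (hW : IsOpenPartition W U) {f : ι → κ} (hf : Function.Surjective f) :
    IsOpenPartition (fun k ↦ ⋃ i ∈ f ⁻¹' {k}, W i) U where
  isOpen _ := isOpen_biUnion fun i _ ↦ hW.isOpen i
  nonempty k := by
    obtain ⟨i, rfl⟩ := hf k
    exact (hW.nonempty i).mono (subset_biUnion_of_mem rfl)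
  disjoint k l hkl := by
    simp only [Function.onFun, disjoint_iUnion_left, disjoint_iUnion_right]
    rintro i rfl j rfl
    exact hW.disjoint fun hij ↦ hkl (congrArg f hij)
  iUnion_eq := by
    rw [← hW.iUnion_eq]
    ext x
    simp

theorem subset_of_isPreconnected (hW : IsOpenPartition W U) {S : Set X} (hS : IsPreconnected S)
    (hSU : S ⊆ U) {i : ι} (hSi : (S ∩ W i).Nonempty) : S ⊆ W i := by
  refine hS.subset_left_of_subset_union (hW.isOpen i) (v := ⋃ j ∈ {j | j ≠ i}, W j)
    (isOpen_biUnion fun j _ ↦ hW.isOpen j) ?_ (fun x hx ↦ ?_) hSi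
  · exact disjoint_iUnion₂_right.2 fun j hj ↦ hW.disjoint (Ne.symm hj)
  · obtain ⟨j, hj⟩ := hW.exists_mem (hSU hx)
    rcases eq_or_ne j i with rfl | hji
    · exact Or.inl hj
    · exact Or.inr (mem_biUnion hji hj)

theorem componentsIn_eq_range (hW : IsOpenPartition W U) (hconn : ∀ i, IsPreconnected (W i)) :
    componentsIn U = range W := by
  have hcomp {i : ι} {x : X} (hx : x ∈ W i) : connectedComponentIn U x = W i :=
    (hW.subset_of_isPreconnected isPreconnected_connectedComponentIn
      (connectedComponentIn_subset U x)
      ⟨x, mem_connectedComponentIn (hW.subset i hx), hx⟩).antisymm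
        ((hconn i).subset_connectedComponentIn hx (hW.subset i))
  ext C
  constructor
  · rintro ⟨x, hx, rfl⟩
    obtain ⟨i, hi⟩ := hW.exists_mem hx
    exact ⟨i, (hcomp hi).symm⟩
  · rintro ⟨i, rfl⟩
    obtain ⟨x, hx⟩ := hW.nonempty i
    exact ⟨x, hW.subset i hx, (hcomp hx).symm⟩

end IsOpenPartition

theorem isOpenPartition_componentsIn [LocallyConnectedSpace X] (hU : IsOpen U) :
    IsOpenPartition ((↑) : componentsIn U → Set X) U where
  isOpen := by
    rintro ⟨_, x, -, rfl⟩
    exact hU.connectedComponentIn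
  nonempty := by
    rintro ⟨_, x, hx, rfl⟩
    exact ⟨x, mem_connectedComponentIn hx⟩
  disjoint := by
    rintro ⟨_, x, _, rfl⟩ ⟨_, y, _, rfl⟩ hne
    refine Set.disjoint_left.2 fun z hzx hzy ↦ hne (Subtype.ext ?_)
    exact (connectedComponentIn_eq hzx).trans (connectedComponentIn_eq hzy).symm
  iUnion_eq := by
    refine subset_antisymm (iUnion_subset ?_) fun x hx ↦
      mem_iUnion.2 ⟨⟨_, x, hx, rfl⟩, mem_connectedComponentIn hx⟩
    rintro ⟨_, x, -, rfl⟩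
    exact connectedComponentIn_subset U x

theorem neg_mem_componentsIn [InvolutiveNeg X] [ContinuousNeg X] (hU : -U = U) {C : Set X}
    (hC : C ∈ componentsIn U) : -C ∈ componentsIn U := by
  obtain ⟨x, hx, rfl⟩ := hC
  refine ⟨-x, by rwa [← hU, Set.neg_mem_neg], ?_⟩
  simpa [hU] using (Homeomorph.neg X).image_connectedComponentIn hx

theorem encard_le_two_mul_of_encard_image_neg_le {X : Type*} [InvolutiveNeg X] {𝒞 : Set (Set X)}
    {N : ℕ} (hN : ((fun C ↦ s(C, -C)) '' 𝒞).encard ≤ N) : 𝒞.encard ≤ 2 * N := by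
  have hfiber (z : Sym2 (Set X)) : 𝒞 ∩ (fun C ↦ s(C, -C)) ⁻¹' {z} ⊆ z.toFinset := by
    rintro C ⟨-, rfl⟩
    simp
  have hfin : 𝒞.Finite := Finite.of_finite_fibers _ (finite_of_encard_le_coe hN)
    fun z _ ↦ z.toFinset.finite_toSet.subset (hfiber z)
  lift 𝒞 to Finset (Set X) using hfin
  rw [← Finset.coe_image, encard_coe_eq_coe_finsetCard] at hN
  rw [encard_coe_eq_coe_finsetCard]
  have hcard := Finset.card_le_mul_card_image (f := fun C ↦ s(C, -C)) 𝒞 2 fun z _ ↦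
    (Finset.card_le_card (t := z.toFinset) fun C hC ↦ by
      rw [Finset.mem_filter] at hC
      exact hfiber z hC).trans (by rw [Sym2.card_toFinset]; split_ifs <;> decide)
  exact_mod_cast hcard.trans (Nat.mul_le_mul_left 2 (by exact_mod_cast hN))

theorem encard_componentsIn_le [LocallyConnectedSpace X] [InvolutiveNeg X] [ContinuousNeg X]
    (hU : IsOpen U) (hneg : -U = U) {N : ℕ}
    (hN : ∀ W : Fin (N + 1) → Set X, IsOpenPartition W U → ∃ i, -W i ≠ W i) :
    (componentsIn U).encard ≤ 2 * N := by
  refine encard_le_two_mul_of_encard_image_neg_le (not_lt.1 fun hlt ↦ ?_)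
  obtain ⟨T, hT, hTcard⟩ := exists_subset_encard_eq (Order.add_one_le_of_lt hlt)
  lift T to Finset (Sym2 (Set X)) using finite_of_encard_eq_coe (k := N + 1) hTcard
  let e : T ≃ Fin (N + 1) := T.equivFinOfCardEq <| by
    rw [encard_coe_eq_coe_finsetCard] at hTcard
    exact_mod_cast hTcard
  have : Nonempty T := ⟨e.symm 0⟩
  let f (C : componentsIn U) : Fin (N + 1) := e (Function.invFun (↑) s((C : Set X), -C))
  have hf : Function.Surjective f := fun i ↦ by
    obtain ⟨C, hC, hCi⟩ := hT (e.symm i).2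
    refine ⟨⟨C, hC⟩, ?_⟩
    simp only [f, hCi]
    rw [Function.leftInverse_invFun Subtype.val_injective, e.apply_symm_apply]
  obtain ⟨i, hi⟩ := hN _ ((isOpenPartition_componentsIn hU).iUnion_fiber hf)
  have hf_neg (C : componentsIn U) : f ⟨-C, neg_mem_componentsIn hneg C.2⟩ = f C := by
    simp only [f, neg_neg, Sym2.eq_swap]
  have hneg_mem {x : X} (hx : x ∈ ⋃ C ∈ f ⁻¹' {i}, (C : Set X)) :
      -x ∈ ⋃ C ∈ f ⁻¹' {i}, (C : Set X) := by
    obtain ⟨C, hCi, hxC⟩ := mem_iUnion₂.1 hx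
    exact mem_iUnion₂.2 ⟨_, (hf_neg C).trans hCi, neg_mem_neg.2 hxC⟩
  exact hi (Set.ext fun x ↦ ⟨fun hx ↦ neg_neg x ▸ hneg_mem hx, hneg_mem⟩)

theorem IsOpenPartition.exists_mem_segment_notMem {E : Type*} [AddCommGroup E] [Module ℝ E]
    [TopologicalSpace E] [ContinuousAdd E] [ContinuousSMul ℝ E] {W : ι → Set E} {U : Set E}
    (hW : IsOpenPartition W U) {i j : ι} (hij : i ≠ j) {x y : E} (hx : x ∈ W i) (hy : y ∈ W j) :
    ∃ z ∈ segment ℝ x y, z ∉ U := by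
  by_contra! hseg
  exact hij (hW.eq_of_mem (hW.subset_of_isPreconnected (convex_segment x y).isPreconnected hseg
    ⟨x, left_mem_segment ℝ x y, hx⟩ (right_mem_segment ℝ x y)) hy)

end OpenPartition

/-! ### Symmetric partitions of the complement of a nodal set -/

section IndicatorLp

variable {α ι : Type*} [Fintype ι]

theorem IsOpenPartition.sum_mul_indicator_apply [TopologicalSpace α] {W : ι → Set α} {U : Set α}
    (hW : IsOpenPartition W U) (a : ι → ℝ) (f : α → ℝ) {i : ι} {x : α} (hx : x ∈ W i) :
    ∑ j, a j * (W j).indicator f x = a i * f x := by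
  rw [Fintype.sum_eq_single i fun j hj ↦ ?_, indicator_of_mem hx]
  rw [indicator_of_notMem fun hxj ↦ hj (hW.eq_of_mem hxj hx), mul_zero]

variable [MeasurableSpace α] {μ : Measure α}

theorem coeFn_sum_smul_toLp {f : ι → α → ℝ} (hf : ∀ i, MemLp (f i) 2 μ) (a : ι → ℝ) :
    ⇑(∑ i, a i • (hf i).toLp (f i)) =ᵐ[μ] fun x ↦ ∑ i, a i * f i x := by
  have hcoe : ∀ᵐ x ∂μ, ∀ i, (a i • (hf i).toLp (f i)) x = a i * f i x := ae_all_iff.2 fun i ↦ by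
    filter_upwards [Lp.coeFn_smul (a i) ((hf i).toLp (f i)), (hf i).coeFn_toLp] with x hx hfx
    rw [hx, Pi.smul_apply, hfx, smul_eq_mul]
  filter_upwards [Lp.coeFn_finsetSum Finset.univ fun i ↦ a i • (hf i).toLp (f i), hcoe]
    with x hx hax
  rw [hx, Finset.sum_apply]
  exact Finset.sum_congr rfl fun i _ ↦ hax i

theorem inner_toLp_indicator_eq_zero {U V : Set α} (hUV : Disjoint U V) {f : α → ℝ}
    (hU : MemLp (U.indicator f) 2 μ) (hV : MemLp (V.indicator f) 2 μ) :
    ⟪hU.toLp _, hV.toLp _⟫ = 0 := by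
  rw [L2.inner_def]
  refine integral_eq_zero_of_ae ?_
  filter_upwards [hU.coeFn_toLp, hV.coeFn_toLp] with x hx hy
  rw [hx, hy]
  by_cases hxU : x ∈ U
  · simp [indicator_of_notMem (hUV.notMem_of_mem_left hxU)]
  · simp [indicator_of_notMem hxU]

end IndicatorLp

section Nodal

variable {k l : ℕ} {P Q : ℝ × ℝ → ℝ}

theorem inner_toLp_indicator_toLp_eq_zero {U : Set (ℝ × ℝ)} (hU : -U = U) (hP : P ∈ hermiteSpace l)
    (hQ : Q ∈ hermiteSpace k) (hkl : ¬ k ≡ l [MOD 2])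
    (hPU : MemLp (U.indicator P) 2 planeGaussian) (hQ' : MemLp Q 2 planeGaussian) :
    ⟪hPU.toLp _, hQ'.toLp Q⟫ = 0 := by
  have hpow : (-1 : ℝ) ^ l * (-1) ^ k = -1 := by
    rw [← pow_add]
    exact Odd.neg_one_pow (by rw [Nat.odd_iff]; unfold Nat.ModEq at hkl; lia)
  have hodd (x : ℝ × ℝ) : U.indicator P (-x) * Q (-x) = -(U.indicator P x * Q x) := by
    have hx : -x ∈ U ↔ x ∈ U := by rw [← Set.mem_neg, hU]
    by_cases hxU : x ∈ U
    · rw [indicator_of_mem (hx.2 hxU), indicator_of_mem hxU, apply_neg_of_mem_hermiteSpace hP,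
        apply_neg_of_mem_hermiteSpace hQ]
      linear_combination P x * Q x * hpow
    · simp [hx, hxU]
  have hzero := integral_neg_eq_self (fun x ↦ U.indicator P x * Q x) planeGaussian
  simp only [hodd, integral_neg] at hzero
  rw [← self_eq_neg.1 hzero.symm, L2.inner_def]
  refine integral_congr_ae ?_
  filter_upwards [hPU.coeFn_toLp, hQ'.coeFn_toLp] with x hx hy
  simp [hx, hy, mul_comm]

theorem mem_orthogonal_hermiteLp {f : Lp ℝ 2 planeGaussian}
    (hf : ∀ a b, a + b = k →
      ⟪f, (memLp_two_of_mem_hermiteSpace (hermiteProd_mem_hermiteSpace a b)).toLp _⟫ = 0) :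
    f ∈ (hermiteLp k)ᗮ := by
  refine (Submodule.mem_orthogonal' _ _).2 fun g hg ↦ ?_
  obtain ⟨P, hP, rfl⟩ := exists_toLp_eq_of_mem_hermiteLp hg
  induction hP using hermiteSpace_induction with
  | prod a b hab => exact hf a b hab
  | zero => exact inner_zero_right f
  | add P Q hP hQ hfP hfQ =>
    rw [MemLp.toLp_add (memLp_two_of_mem_hermiteSpace hP) (memLp_two_of_mem_hermiteSpace hQ),
      inner_add_right, hfP (toLp_mem_hermiteLp hP), hfQ (toLp_mem_hermiteLp hQ), add_zero]
  | smul c P hP hfP =>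
    rw [MemLp.toLp_const_smul c (memLp_two_of_mem_hermiteSpace hP), real_inner_smul_right,
      hfP (toLp_mem_hermiteLp hP), mul_zero]

theorem tendsto_cos_nhdsLT_one : Tendsto Real.cos (𝓝[≠] 0) (𝓝[<] 1) := by
  have hcos : Tendsto Real.cos (𝓝 0) (𝓝 1) := Real.cos_zero ▸ Real.continuous_cos.tendsto 0
  refine tendsto_nhdsWithin_iff.2 ⟨hcos.mono_left nhdsWithin_le_nhds, ?_⟩
  have hsmall : ∀ᶠ θ : ℝ in 𝓝[≠] 0, θ ∈ Ioo (-(2 * Real.pi)) (2 * Real.pi) :=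
    nhdsWithin_le_nhds (Ioo_mem_nhds (by linarith [Real.pi_pos]) (by linarith [Real.pi_pos]))
  filter_upwards [hsmall, self_mem_nhdsWithin] with θ hθ hθ0
  exact (Real.cos_le_one θ).lt_of_ne fun h ↦
    hθ0 ((Real.cos_eq_one_iff_of_lt_of_lt hθ.1 hθ.2).1 h)

variable {ι : Type*} [Fintype ι] {W : ι → Set (ℝ × ℝ)}

theorem sum_smul_toLp_indicator_mem_hermiteLp (hP : P ∈ hermiteSpace l)
    (hW : IsOpenPartition W {x | P x ≠ 0})
    (hPW : ∀ i, MemLp ((W i).indicator P) 2 planeGaussian) {a : ι → ℝ}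
    (ha : ∀ k < l, ∑ i, a i • (hPW i).toLp _ ∈ (hermiteLp k)ᗮ) :
    ∑ i, a i • (hPW i).toLp _ ∈ hermiteLp l := by
  have hsum : ∑ i, (hPW i).toLp _ = (memLp_two_of_mem_hermiteSpace hP).toLp P := by
    refine Lp.ext ?_
    have hcoe := coeFn_sum_smul_toLp hPW 1
    simp only [Pi.one_apply, one_smul, one_mul] at hcoe
    filter_upwards [hcoe, (memLp_two_of_mem_hermiteSpace hP).coeFn_toLp] with x hx hPx
    rw [hx, hPx]
    by_cases hx0 : P x = 0
    · simp [indicator, hx0]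
    · obtain ⟨i, hi⟩ := hW.exists_mem hx0
      simpa using hW.sum_mul_indicator_apply 1 P hi
  refine sum_smul_mem_of_tendsto_inner_div isHilbertSum_hermiteLp isSymmetric_ouOperator
    (fun θ k g ↦ ouOperator_eq_smul_of_mem_hermiteLp θ) tendsto_cos_nhdsLT_one
    (fun i j hij ↦ inner_toLp_indicator_eq_zero (hW.disjoint hij) _ _)
    (hsum ▸ toLp_mem_hermiteLp hP) (fun i j hij ↦ ?_) ha
  refine (tendsto_inner_ouOperator_indicator_div (hasTemperateGrowth_of_mem_hermiteSpace hP)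
    (hW.isOpen i) (hW.disjoint hij) (fun x hx y hy ↦ ?_) _ _).mono_left nhdsWithin_le_nhds
  simpa using hW.exists_mem_segment_notMem hij hx hy

theorem exists_mem_hermiteSpace_eqOn_smul (hP : P ∈ hermiteSpace l)
    (hW : IsOpenPartition W {x | P x ≠ 0})
    (hPW : ∀ i, MemLp ((W i).indicator P) 2 planeGaussian) {a : ι → ℝ}
    (ha : ∀ k < l, ∑ i, a i • (hPW i).toLp _ ∈ (hermiteLp k)ᗮ) :
    ∃ Q ∈ hermiteSpace l, ∀ i, EqOn Q (a i • P) (W i) := by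
  obtain ⟨Q, hQ, hQa⟩ :=
    exists_toLp_eq_of_mem_hermiteLp (sum_smul_toLp_indicator_mem_hermiteLp hP hW hPW ha)
  refine ⟨Q, hQ, fun i ↦ Measure.eqOn_open_of_ae_eq (μ := planeGaussian) ?_ (hW.isOpen i)
    (continuous_of_mem_hermiteSpace hQ).continuousOn
    ((continuous_of_mem_hermiteSpace hP).const_smul _).continuousOn⟩
  have hQ_ae := (memLp_two_of_mem_hermiteSpace hQ).coeFn_toLp
  rw [hQa] at hQ_ae
  rw [EventuallyEq, ae_restrict_iff' (hW.isOpen i).measurableSet]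
  filter_upwards [hQ_ae, coeFn_sum_smul_toLp hPW a] with x hQx hax hx
  rw [← hQx, hax, hW.sum_mul_indicator_apply a P hx, Pi.smul_apply, smul_eq_mul]

/-- The indices `(a, b)` of the Hermite products orthogonal to `hermiteSpace l` that have the same
parity as its elements: only these impose a condition on a function of that parity. -/
def lowerSameParityIndices (l : ℕ) : Finset (ℕ × ℕ) :=
  {k ∈ Finset.range l | k ≡ l [MOD 2]}.biUnion Finset.HasAntidiagonal.antidiagonal

theorem mem_lowerSameParityIndices {p : ℕ × ℕ} :
    p ∈ lowerSameParityIndices l ↔ p.1 + p.2 < l ∧ p.1 + p.2 ≡ l [MOD 2] := by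
  simp [lowerSameParityIndices]

theorem four_mul_card_lowerSameParityIndices_le (l : ℕ) :
    4 * (lowerSameParityIndices l).card ≤ l ^ 2 := by
  induction l using Nat.twoStepInduction with
  | zero => simp [lowerSameParityIndices]
  | one => decide
  | more l ih _ =>
    have hsub : lowerSameParityIndices (l + 2) ⊆
        lowerSameParityIndices l ∪ Finset.HasAntidiagonal.antidiagonal l := fun p hp ↦ by
      simp only [mem_lowerSameParityIndices, Finset.mem_union,
        Finset.HasAntidiagonal.mem_antidiagonal, Nat.ModEq] at hp ⊢
      lia
    have hcard := (Finset.card_le_card hsub).trans (Finset.card_union_le _ _)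
    rw [Finset.Nat.card_antidiagonal] at hcard
    nlinarith

theorem card_le_of_isOpenPartition (hP : P ∈ hermiteSpace l)
    (hW : IsOpenPartition W {x | P x ≠ 0}) (hneg : ∀ i, -W i = W i) :
    Fintype.card ι ≤ (lowerSameParityIndices l).card + 1 := by
  by_contra! hcard
  have : Nonempty ι := Fintype.card_pos_iff.1 (by lia)
  obtain ⟨i₀⟩ := this
  have hPW (i : ι) : MemLp ((W i).indicator P) 2 planeGaussian :=
    (memLp_two_of_mem_hermiteSpace hP).indicator (hW.isOpen i).measurableSet
  obtain ⟨a, ha, ha₀, horth⟩ := exists_ne_zero_forall_inner_sum_smul_eq_zero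
    (κ := lowerSameParityIndices l) (by simpa using hcard) (fun i ↦ (hPW i).toLp _)
    (fun p ↦ (memLp_two_of_mem_hermiteSpace (hermiteProd_mem_hermiteSpace p.1.1 p.1.2)).toLp _) i₀
  have hortho (k : ℕ) (hk : k < l) : ∑ i, a i • (hPW i).toLp _ ∈ (hermiteLp k)ᗮ := by
    refine mem_orthogonal_hermiteLp ?_
    rintro b c rfl
    by_cases hpar : b + c ≡ l [MOD 2]
    · exact horth ⟨(b, c), mem_lowerSameParityIndices.2 ⟨hk, hpar⟩⟩
    · simp only [sum_inner, real_inner_smul_left, inner_toLp_indicator_toLp_eq_zero (hneg _) hP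
        (hermiteProd_mem_hermiteSpace b c) hpar, mul_zero, Finset.sum_const_zero]
  obtain ⟨Q, hQ, hQa⟩ := exists_mem_hermiteSpace_eqOn_smul hP hW hPW hortho
  obtain ⟨x₀, hx₀⟩ := hW.nonempty i₀
  have hQ_zero : EqOn Q 0 univ :=
    (analyticOnNhd_of_mem_hermiteSpace hQ).eqOn_zero_of_preconnected_of_eventuallyEq_zero
      isPreconnected_univ (mem_univ x₀) <| by
        filter_upwards [(hW.isOpen i₀).mem_nhds hx₀] with x hx
        simp [hQa i₀ hx, ha₀]
  refine ha (funext fun i ↦ ?_)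
  obtain ⟨x, hx⟩ := hW.nonempty i
  have hax : a i * P x = 0 := (hQa i hx).symm.trans (hQ_zero (mem_univ x))
  exact (mul_eq_zero.1 hax).resolve_right (hW.subset i hx)

theorem encard_componentsIn_ne_zero_le (hP : P ∈ hermiteSpace l) :
    (componentsIn {x | P x ≠ 0}).encard ≤ 2 * ((lowerSameParityIndices l).card + 1 : ℕ) := by
  refine encard_componentsIn_le (isOpen_ne_fun (continuous_of_mem_hermiteSpace hP)
    continuous_const) ?_ fun W hW ↦ ?_
  · ext x
    simp [apply_neg_of_mem_hermiteSpace hP]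
  · by_contra! hneg
    simpa using card_le_of_isOpenPartition hP hW hneg

end Nodal

section Courant

theorem mu_eq_ncard_componentsIn (u : ℝ × ℝ → ℝ) :
    mu u = (componentsIn {x | u x ≠ 0}).ncard := rfl

theorem exists_mem_hermiteSpace_of_mem_eigenspace {l : ℕ} {u : ℝ × ℝ → ℝ} (hu : u ∈ eigenspace l) :
    ∃ P ∈ hermiteSpace l, ∀ x, u x = P x * Real.exp (-(x.1 ^ 2 + x.2 ^ 2) / 2) := by
  induction hu using Submodule.span_induction with
  | mem f hf =>
    obtain ⟨j, hj, rfl⟩ := hf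
    have hmem := hermiteProd_mem_hermiteSpace (l - j) j
    rw [Nat.sub_add_cancel hj] at hmem
    exact ⟨_, hmem, fun _ ↦ rfl⟩
  | zero => exact ⟨0, zero_mem _, by simp⟩
  | add u v _ _ hu hv =>
    obtain ⟨P, hP, hu⟩ := hu
    obtain ⟨Q, hQ, hv⟩ := hv
    exact ⟨P + Q, add_mem hP hQ, fun x ↦ by simp [hu, hv, add_mul]⟩
  | smul c u _ hu =>
    obtain ⟨P, hP, hu⟩ := hu
    exact ⟨c • P, Submodule.smul_mem _ c hP, fun x ↦ by simp [hu, mul_assoc]⟩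

theorem mu_le_two_mul_card_lowerSameParityIndices {l : ℕ} {u : ℝ × ℝ → ℝ} (hu : u ∈ eigenspace l) :
    mu u ≤ 2 * ((lowerSameParityIndices l).card + 1) := by
  obtain ⟨P, hP, huP⟩ := exists_mem_hermiteSpace_of_mem_eigenspace hu
  have hnodal : {x | u x ≠ 0} = {x | P x ≠ 0} := by
    ext x
    simp [huP, Real.exp_ne_zero]
  rw [mu_eq_ncard_componentsIn, hnodal]
  exact ENat.toNat_le_of_le_natCast (mod_cast encard_componentsIn_ne_zero_le hP)

theorem mu_lt_of_three_le {l : ℕ} (hl : 3 ≤ l) {u : ℝ × ℝ → ℝ} (hu : u ∈ eigenspace l) :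
    mu u < l * (l + 1) / 2 + 1 := by
  have hmu := mu_le_two_mul_card_lowerSameParityIndices hu
  have hcard := four_mul_card_lowerSameParityIndices_le l
  have : 2 * mu u < l * (l + 1) + 2 := by nlinarith
  obtain ⟨m, hm⟩ := Nat.even_mul_succ_self l
  lia

end Courant

/-! ### Products of Hermite functions of low degree -/

section Product

variable {X Y ι κ : Type*}

theorem IsOpenPartition.prod [TopologicalSpace X] [TopologicalSpace Y] {V : ι → Set X} {S : Set X}
    {W : κ → Set Y} {T : Set Y} (hV : IsOpenPartition V S) (hW : IsOpenPartition W T) :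
    IsOpenPartition (fun i : ι × κ ↦ V i.1 ×ˢ W i.2) (S ×ˢ T) where
  isOpen i := (hV.isOpen i.1).prod (hW.isOpen i.2)
  nonempty i := (hV.nonempty i.1).prod (hW.nonempty i.2)
  disjoint i j hij := Set.disjoint_left.2 fun _ hi hj ↦
    hij (Prod.ext (hV.eq_of_mem hi.1 hj.1) (hW.eq_of_mem hi.2 hj.2))
  iUnion_eq := by rw [iUnion_prod, hV.iUnion_eq, hW.iUnion_eq]

theorem mu_eq_card [Fintype ι] {W : ι → Set (ℝ × ℝ)} {u : ℝ × ℝ → ℝ}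
    (hW : IsOpenPartition W {x | u x ≠ 0}) (hconv : ∀ i, Convex ℝ (W i)) :
    mu u = Fintype.card ι := by
  rw [mu_eq_ncard_componentsIn,
    hW.componentsIn_eq_range fun i ↦ (hconv i).isPreconnected, ← image_univ,
    ncard_image_of_injective _ hW.injective, ncard_univ, Nat.card_eq_fintype_card]

theorem mu_phi_eq_card_mul_card [Fintype ι] [Fintype κ] {m n : ℕ} {V : ι → Set ℝ} {W : κ → Set ℝ}
    (hV : IsOpenPartition V {s | (H m).eval s ≠ 0}) (hV_conv : ∀ i, Convex ℝ (V i))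
    (hW : IsOpenPartition W {t | (H n).eval t ≠ 0}) (hW_conv : ∀ j, Convex ℝ (W j)) :
    mu (phi m n) = Fintype.card ι * Fintype.card κ := by
  have hprod : {x | phi m n x ≠ 0} = {s | (H m).eval s ≠ 0} ×ˢ {t | (H n).eval t ≠ 0} := by
    ext x
    simp [phi, Real.exp_ne_zero]
  rw [mu_eq_card (hprod ▸ hV.prod hW) fun i : ι × κ ↦ (hV_conv i.1).prod (hW_conv i.2),
    Fintype.card_prod]

theorem isOpenPartition_eval_H_zero_ne_zero :
    IsOpenPartition (fun _ : Unit ↦ univ) {t | (H 0).eval t ≠ 0} where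
  isOpen _ := isOpen_univ
  nonempty _ := univ_nonempty
  disjoint i j hij := absurd (Subsingleton.elim i j) hij
  iUnion_eq := by
    rw [iUnion_const]
    simp [H]

theorem isOpenPartition_eval_H_one_ne_zero :
    IsOpenPartition (fun s : Bool ↦ bif s then Ioi 0 else Iio 0) {t | (H 1).eval t ≠ 0} where
  isOpen s := by cases s; exacts [isOpen_Iio, isOpen_Ioi]
  nonempty s := by cases s; exacts [nonempty_Iio, nonempty_Ioi]
  disjoint i j hij := by
    cases i <;> cases j
    exacts [absurd rfl hij, Iio_disjoint_Ioi_same, Iio_disjoint_Ioi_same.symm, absurd rfl hij]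
  iUnion_eq := by
    ext t
    simp [H, lt_or_lt_iff_ne]

theorem convex_bif_Ioi_Iio (s : Bool) : Convex ℝ (bif s then Ioi (0 : ℝ) else Iio 0) := by
  cases s; exacts [convex_Iio 0, convex_Ioi 0]

theorem mu_phi_zero_zero : mu (phi 0 0) = 1 :=
  mu_phi_eq_card_mul_card isOpenPartition_eval_H_zero_ne_zero (fun _ ↦ convex_univ)
    isOpenPartition_eval_H_zero_ne_zero fun _ ↦ convex_univ

theorem mu_phi_one_zero : mu (phi 1 0) = 2 :=
  mu_phi_eq_card_mul_card isOpenPartition_eval_H_one_ne_zero convex_bif_Ioi_Iio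
    isOpenPartition_eval_H_zero_ne_zero fun _ ↦ convex_univ

theorem mu_phi_one_one : mu (phi 1 1) = 4 :=
  mu_phi_eq_card_mul_card isOpenPartition_eval_H_one_ne_zero convex_bif_Ioi_Iio
    isOpenPartition_eval_H_one_ne_zero convex_bif_Ioi_Iio

theorem mu_zero : mu 0 = 0 := by simp [mu]

theorem phi_mem_eigenspace (m n : ℕ) : phi m n ∈ eigenspace (m + n) :=
  Submodule.subset_span ⟨n, n.le_add_left m, by rw [Nat.add_sub_cancel]⟩

end Product

end CourantSharp

/-- **Corollary 6.2.** The only Courant sharp eigenvalues of the 2D isotropic quantum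
harmonic oscillator are `2`, `4` and `6`: for `ℓ ≥ 3` every nonzero `u ∈ E_ℓ` has
strictly fewer than `ℓ(ℓ+1)/2 + 1` nodal domains, while for `ℓ ∈ {0,1,2}` some
nonzero `u ∈ E_ℓ` attains the Courant bound `ℓ(ℓ+1)/2 + 1`. -/
theorem courant_sharp_iff :
    (∀ ℓ : ℕ, 3 ≤ ℓ → ∀ u : ℝ × ℝ → ℝ, u ∈ eigenspace ℓ → u ≠ 0 →
      mu u < ℓ * (ℓ + 1) / 2 + 1) ∧
    (∀ ℓ : ℕ, ℓ ≤ 2 → ∃ u : ℝ × ℝ → ℝ, u ∈ eigenspace ℓ ∧ u ≠ 0 ∧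
      mu u = ℓ * (ℓ + 1) / 2 + 1) := by
  refine ⟨fun ℓ hℓ u hu _ ↦ CourantSharp.mu_lt_of_three_le hℓ hu, fun ℓ hℓ ↦ ?_⟩
  suffices h : ∃ u ∈ eigenspace ℓ, mu u = ℓ * (ℓ + 1) / 2 + 1 by
    obtain ⟨u, hu, hmu⟩ := h
    refine ⟨u, hu, ?_, hmu⟩
    rintro rfl
    rw [CourantSharp.mu_zero] at hmu
    lia
  interval_cases ℓ
  · exact ⟨phi 0 0, CourantSharp.phi_mem_eigenspace 0 0, CourantSharp.mu_phi_zero_zero⟩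
  · exact ⟨phi 1 0, CourantSharp.phi_mem_eigenspace 1 0, CourantSharp.mu_phi_one_zero⟩
  · exact ⟨phi 1 1, CourantSharp.phi_mem_eigenspace 1 1, CourantSharp.mu_phi_one_one⟩
end
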